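/- arXiv:2112.04458 — 2 statements merged into one kernel-verified Lean document; each statement's English description precedes it below -/
import Mathlib

section
/- Let ρ be a quasi-periodic labelling. Then the group G_ρ is simple. -/
/-! ### Letters, labellings and quasi-periodicity -/

/-- The four letters `a, b, a⁻¹, b⁻¹`. -/
inductive Letter : Type
  | a : Letter
  | b : Letter
  | A : Letter  -- `a⁻¹`
  | B : Letter  -- `b⁻¹`
  deriving DecidableEq

/-- The formal inverse of a letter. -/
def Letter.inv : Letter → Letter
  | .a => .A
  | .A => .a
  | .b => .B
  | .B => .b

/-- We encode the set of half-integers `½ℤ` by `ℤ` via `m ↦ m / 2`; integer points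
correspond to even indices and proper half-integer points to odd indices.
A labelling assigns `a^{±1}` to integer points and `b^{±1}` to half-integer points. -/
def IsLabelling (ρ : ℤ → Letter) : Prop :=
  ∀ m : ℤ, (Even m → ρ m = Letter.a ∨ ρ m = Letter.A) ∧
    (Odd m → ρ m = Letter.b ∨ ρ m = Letter.B)

/-- The word of the labelling `ρ` along the block `{k, k+1, …, k+n}` (in the
half-integer encoding, the block of size `n+1` starting at `k/2`). -/
def blockWord (ρ : ℤ → Letter) (k : ℤ) (n : ℕ) : List Letter :=
  (List.range (n + 1)).map fun i => ρ (k + i)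

/-- The formal inverse of a word: reverse the word and invert each letter. -/
def wordInv (w : List Letter) : List Letter :=
  (w.map Letter.inv).reverse

/-- A labelling is quasi-periodic if (1) every subword of the labelling appears as a
subword (string of consecutive letters) of every sufficiently large block, and (2) the
formal inverse of every subword of the labelling is again a subword of the labelling. -/
def IsQuasiPeriodic (ρ : ℤ → Letter) : Prop :=
  IsLabelling ρ ∧
    (∀ (k : ℤ) (n : ℕ), ∃ N : ℕ, ∀ (k' : ℤ) (n' : ℕ), N ≤ n' + 1 →
      (blockWord ρ k n) <:+: (blockWord ρ k' n')) ∧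
    (∀ (k : ℤ) (n : ℕ), ∃ k' : ℤ, blockWord ρ k' n = wordInv (blockWord ρ k n))

/-! ### Thompson's group `F` and the subgroup `H`

Orientation-preserving homeomorphisms of `[0,1]` are realised as order-automorphisms
of `ℝ` that are the identity outside `[0,1]`; orientation-preserving homeomorphisms of
the line are order-automorphisms of `ℝ`. -/

/-- A dyadic rational real number, i.e. an element of `ℤ[1/2]`. -/
def IsDyadic (x : ℝ) : Prop :=
  ∃ (a : ℤ) (b : ℕ), x = (a : ℝ) / 2 ^ b

/-- Membership in Thompson's group `F`: the identity outside `[0,1]`, and on `[0,1]`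
piecewise linear with breakpoints in `ℤ[1/2]` and slopes integer powers of `2`. -/
def InThompsonF (f : ℝ ≃o ℝ) : Prop :=
  (∀ x : ℝ, x ∉ Set.Icc (0 : ℝ) 1 → f x = x) ∧
    ∃ (m : ℕ) (x : Fin (m + 1) → ℝ), x 0 = 0 ∧ x (Fin.last m) = 1 ∧ StrictMono x ∧
      (∀ i, IsDyadic (x i)) ∧
      ∀ i : Fin m, ∃ (k : ℤ) (c : ℝ),
        ∀ t ∈ Set.Icc (x i.castSucc) (x i.succ), f t = 2 ^ k * t + c

/-- Membership in the subgroup `H ≤ F` of elements whose slopes at `0` and `1`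
coincide. -/
def InH (f : ℝ ≃o ℝ) : Prop :=
  InThompsonF f ∧
    ∃ (k : ℤ) (ε : ℝ), 0 < ε ∧ (∀ t ∈ Set.Icc (0 : ℝ) ε, f t = 2 ^ k * t) ∧
      ∀ t ∈ Set.Icc (1 - ε) (1 : ℝ), f t = 1 + 2 ^ k * (t - 1)

/-! ### The generators of `G_ρ` -/

/-- `ζ` is the homeomorphism of `ℝ` which on each `[n, n+1]` is the conjugate of `ν`
(a homeomorphism of `[0,1]`) by the orientation-preserving isometry `[n,n+1] → [0,1]`
if `ρ(n + ½) = b`, and by the orientation-reversing isometry if `ρ(n + ½) = b⁻¹`.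
(In the encoding of `½ℤ` by `ℤ`, the point `n + ½` has index `2n + 1`.) -/
def IsZeta (ρ : ℤ → Letter) (ν ζ : ℝ ≃o ℝ) : Prop :=
  ∀ n : ℤ, ∀ x ∈ Set.Icc (n : ℝ) (n + 1),
    (ρ (2 * n + 1) = Letter.b → ζ x = n + ν (x - n)) ∧
    (ρ (2 * n + 1) = Letter.B → ζ x = (n + 1) - ν ((n + 1) - x))

/-- `χ` is the homeomorphism of `ℝ` which on each `[n-½, n+½]` is the conjugate of `ν`
by the orientation-preserving isometry `[n-½, n+½] → [0,1]` if `ρ(n) = a`, and by the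
orientation-reversing isometry if `ρ(n) = a⁻¹`. -/
def IsChi (ρ : ℤ → Letter) (ν χ : ℝ ≃o ℝ) : Prop :=
  ∀ n : ℤ, ∀ x ∈ Set.Icc ((n : ℝ) - 1/2) ((n : ℝ) + 1/2),
    (ρ (2 * n) = Letter.a → χ x = ((n : ℝ) - 1/2) + ν (x - ((n : ℝ) - 1/2))) ∧
    (ρ (2 * n) = Letter.A → χ x = ((n : ℝ) + 1/2) - ν (((n : ℝ) + 1/2) - x))

/-! ### Bounded cohomology in degree two -/

/-- A bounded 2-cocycle on `G` with trivial real coefficients. -/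
def IsBounded2Cocycle {G : Type*} [Group G] (ω : G → G → ℝ) : Prop :=
  (∃ C : ℝ, ∀ g h : G, |ω g h| ≤ C) ∧
    ∀ g₁ g₂ g₃ : G, ω g₂ g₃ - ω (g₁ * g₂) g₃ + ω g₁ (g₂ * g₃) - ω g₁ g₂ = 0

/-- `ω` is the coboundary of a bounded real-valued function. -/
def IsCoboundaryOfBounded {G : Type*} [Group G] (ω : G → G → ℝ) : Prop :=
  ∃ φ : G → ℝ, (∃ C : ℝ, ∀ g : G, |φ g| ≤ C) ∧
    ∀ g h : G, ω g h = φ h - φ (g * h) + φ g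

/-- A group is 2-boundedly acyclic if `H²_b(G; ℝ) = 0`, i.e. every bounded 2-cocycle is
the coboundary of a bounded function. -/
def Is2BoundedlyAcyclic (G : Type*) [Group G] : Prop :=
  ∀ ω : G → G → ℝ, IsBounded2Cocycle ω → IsCoboundaryOfBounded ω

/-- A 2-cocycle is homogeneous if it vanishes on powers of a single element. -/
def IsHomogeneous {G : Type*} [Group G] (ω : G → G → ℝ) : Prop :=
  ∀ (g : G) (i j : ℤ), ω (g ^ i) (g ^ j) = 0

/-!
The unit intervals centred at the half-integers are called cells; those of either parity tile the
line, and cells of opposite parity overlap in halves. A generator of `G_ρ` acts on all cells of one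
parity by copies of a single homeomorphism, flipped according to `ρ`: it is a lift of this
homeomorphism. The lifts of the perfect group `A` of dyadic piecewise linear homeomorphisms
supported in the interior of a cell belong to `G_ρ`. A commutator of two lifts of opposite parities
is a lift to just those cells for which the overlapping half of the neighbour is oriented in a
prescribed way. Hence `G_ρ` contains the lifts of `A` to the cells around which `ρ` shows a given
finite pattern.

Let `N` be a nontrivial normal subgroup and let `g ∈ N` displace an interval inside some cell.
Elements of `G_ρ` are locally determined by `ρ`, and quasi-periodicity prevents `ρ` from having
nontrivial local symmetries, so `g` displaces the copies of this interval in all cells with the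
same surrounding pattern from one another. If `F₁` and `F₂` are lifts, to these cells, of elements
supported in the interval, then `g F₁ g⁻¹` commutes with `F₂`, which gives `[F₁, F₂] ∈ N`. As `A` is
perfect, `N` contains the lifts of `A` to these cells. They occur with bounded gaps, so passing
repeatedly to neighbouring cells yields the lifts to all cells. Finally `H` is generated by `A` and
an element whose lift of one parity is the lift of an element of `A` of the other parity, so the
generators of `G_ρ` belong to `N`.
-/

/-! ### Dyadic rationals -/

namespace IsDyadic

variable {x y : ℝ}

theorem intCast (n : ℤ) : IsDyadic (n : ℝ) := ⟨n, 0, by simp⟩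

theorem zero : IsDyadic (0 : ℝ) := by simpa using intCast 0

theorem one : IsDyadic (1 : ℝ) := by simpa using intCast 1

theorem exists_common_unit (hx : IsDyadic x) (hy : IsDyadic y) :
    ∃ g, IsDyadic g ∧ ∃ n m : ℤ, x = n * g ∧ y = m * g := by
  obtain ⟨a, b, rfl⟩ := hx
  obtain ⟨c, d, rfl⟩ := hy
  refine ⟨1 / 2 ^ (b + d), ⟨1, b + d, by simp⟩, a * 2 ^ d, c * 2 ^ b, ?_, ?_⟩ <;>
  · push_cast
    rw [pow_add]
    field_simp

theorem intCast_mul (n : ℤ) (hx : IsDyadic x) : IsDyadic (n * x) := by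
  obtain ⟨a, b, rfl⟩ := hx
  exact ⟨n * a, b, by push_cast; ring⟩

theorem add (hx : IsDyadic x) (hy : IsDyadic y) : IsDyadic (x + y) := by
  obtain ⟨g, hg, n, m, rfl, rfl⟩ := exists_common_unit hx hy
  simpa [add_mul] using intCast_mul (n + m) hg

theorem neg (hx : IsDyadic x) : IsDyadic (-x) := by
  simpa using intCast_mul (-1) hx

theorem sub (hx : IsDyadic x) (hy : IsDyadic y) : IsDyadic (x - y) :=
  sub_eq_add_neg x y ▸ hx.add hy.neg

theorem half (hx : IsDyadic x) : IsDyadic (x / 2) := by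
  obtain ⟨a, b, rfl⟩ := hx
  exact ⟨a, b + 1, by rw [pow_succ]; field_simp⟩

theorem exists_between {a b : ℝ} (h : a < b) : ∃ d, IsDyadic d ∧ a < d ∧ d < b := by
  obtain ⟨n, hn⟩ := pow_unbounded_of_one_lt (b - a)⁻¹ one_lt_two
  have hn0 : (0 : ℝ) < 2 ^ n := by positivity
  have hlen : 1 < (b - a) * 2 ^ n := by
    rwa [inv_lt_iff_one_lt_mul₀' (by linarith)] at hn
  refine ⟨(⌊a * 2 ^ n⌋ + 1 : ℤ) / 2 ^ n, ⟨_, n, rfl⟩, ?_, ?_⟩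
  · rw [lt_div_iff₀ hn0]
    exact_mod_cast Int.lt_floor_add_one (a * 2 ^ n)
  · rw [div_lt_iff₀ hn0]
    push_cast
    linarith [Int.floor_le (a * 2 ^ n)]

end IsDyadic

namespace GRho

open Filter Set Topology
open scoped commutatorElement

/-- The additive group `ℤ[1/2]`, as an index set for the generators of `dilationGroup`. -/
def dyadics : AddSubgroup ℝ where
  carrier := {x | IsDyadic x}
  zero_mem' := .zero
  add_mem' := .add
  neg_mem' := .neg

theorem exists_dyadic_nsmul_two_eq (x : dyadics) : ∃ y : dyadics, 2 • y = x :=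
  ⟨⟨x / 2, x.2.half⟩, Subtype.ext (by simp; ring)⟩

theorem exists_dyadic_zsmul_eq (x y : dyadics) :
    ∃ g : dyadics, ∃ n m : ℤ, x = n • g ∧ y = m • g := by
  obtain ⟨g, hg, n, m, hx, hy⟩ := x.2.exists_common_unit y.2
  exact ⟨⟨g, hg⟩, n, m, Subtype.ext (by simpa using hx), Subtype.ext (by simpa using hy)⟩

/-! ### Families in a group that conjugate each other like the dilations `x ↦ 2x - p` -/

section DilationFamily

variable {M Q : Type*} [AddCommGroup M] [Group Q] {t : M → Q} {x y : Q} {d e : M}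

/-- `x` acts by conjugation on the family `t` as the translation by `d` acts on the indices. -/
def ActsAsTranslation (t : M → Q) (x : Q) (d : M) : Prop :=
  ∀ r, x * t r * x⁻¹ = t (r + d)

namespace ActsAsTranslation

theorem mul (hx : ActsAsTranslation t x d) (hy : ActsAsTranslation t y e) :
    ActsAsTranslation t (x * y) (d + e) := fun r => by
  calc x * y * t r * (x * y)⁻¹ = x * (y * t r * y⁻¹) * x⁻¹ := by group
    _ = t (r + (d + e)) := by rw [hy, hx, add_assoc, add_comm e]

theorem inv (hx : ActsAsTranslation t x d) : ActsAsTranslation t x⁻¹ (-d) := fun r => by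
  rw [← sub_eq_add_neg, ← sub_add_cancel r d, ← hx, sub_add_cancel]
  group

theorem zpow (hx : ActsAsTranslation t x d) (n : ℤ) : ActsAsTranslation t (x ^ n) (n • d) := by
  induction n with
  | zero => simp [ActsAsTranslation]
  | succ n ih => simpa only [zpow_add_one, add_smul, one_smul] using ih.mul hx
  | pred n ih =>
    have h := ih.mul hx.inv
    rwa [← zpow_sub_one, ← sub_one_zsmul] at h

theorem inv_mul_mem_center (ht : Subgroup.closure (Set.range t) = ⊤)
    (hx : ActsAsTranslation t x d) (hy : ActsAsTranslation t y d) :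
    x⁻¹ * y ∈ Subgroup.center Q := by
  rw [← Subgroup.centralizer_univ, ← Subgroup.coe_top, ← ht, Subgroup.centralizer_closure,
    Subgroup.mem_centralizer_iff]
  rintro _ ⟨r, rfl⟩
  have h := (hx.inv.mul hy) r
  rw [neg_add_cancel, add_zero, mul_inv_eq_iff_eq_mul] at h
  exact h.symm

/-- A central extension of a locally cyclic group is abelian. -/
theorem commute (ht : Subgroup.closure (Set.range t) = ⊤)
    (hs : ∀ d, ∃ s, ActsAsTranslation t s d)
    (hcyc : ∀ d e : M, ∃ g, ∃ n m : ℤ, d = n • g ∧ e = m • g)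
    (hx : ActsAsTranslation t x d) (hy : ActsAsTranslation t y e) : Commute x y := by
  obtain ⟨g, n, m, rfl, rfl⟩ := hcyc d e
  obtain ⟨s, hs⟩ := hs g
  have central {z : Q} (hz : z ∈ Subgroup.center Q) (w : Q) : Commute z w :=
    (Subgroup.mem_center_iff.1 hz w).symm
  have hx' := inv_mul_mem_center ht (hs.zpow n) hx
  have hy' := inv_mul_mem_center ht (hs.zpow m) hy
  rw [← mul_inv_cancel_left (s ^ n) x, ← mul_inv_cancel_left (s ^ m) y]
  exact (((Commute.refl s).zpow_zpow n m).mul_right (central hy' _).symm).mul_left (central hx' _)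

end ActsAsTranslation

theorem inv_conj_of_conj_eq (ht : ∀ p q, t p * t q * (t p)⁻¹ = t (2 • q - p)) {p q r : M}
    (h : 2 • q = r + p) : (t p)⁻¹ * t r * t p = t q := by
  rw [eq_sub_of_add_eq h.symm, ← ht]
  group

theorem actsAsTranslation_mul_inv (ht : ∀ p q, t p * t q * (t p)⁻¹ = t (2 • q - p))
    (h2 : ∀ x : M, ∃ y, 2 • y = x) (p q : M) :
    ActsAsTranslation t (t p * (t q)⁻¹) (q - p) := fun r => by
  obtain ⟨e, he⟩ := h2 (r + q)
  calc t p * (t q)⁻¹ * t r * (t p * (t q)⁻¹)⁻¹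
      = t p * ((t q)⁻¹ * t r * t q) * (t p)⁻¹ := by group
    _ = t (r + (q - p)) := by rw [inv_conj_of_conj_eq ht he, ht, he, add_sub_assoc]

theorem mul_inv_add_eq (hgen : Subgroup.closure (Set.range t) = ⊤)
    (ht : ∀ p q, t p * t q * (t p)⁻¹ = t (2 • q - p)) (h2 : ∀ x : M, ∃ y, 2 • y = x)
    (hcyc : ∀ d e : M, ∃ g, ∃ n m : ℤ, d = n • g ∧ e = m • g) (p d : M) :
    t p * (t (p + d))⁻¹ = t 0 * (t d)⁻¹ := by
  have hact (d : M) : ActsAsTranslation t (t 0 * (t d)⁻¹) d := by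
    simpa using actsAsTranslation_mul_inv ht h2 0 d
  have hcomm := (hact p).commute hgen (fun d => ⟨_, hact d⟩) hcyc (hact d)
  calc t p * (t (p + d))⁻¹
      = (t 0 * (t p)⁻¹) * t 0 * (t 0 * (t p)⁻¹)⁻¹ *
        ((t 0 * (t p)⁻¹) * t d * (t 0 * (t p)⁻¹)⁻¹)⁻¹ := by
          rw [hact, hact, zero_add, add_comm d]
    _ = (t 0 * (t p)⁻¹) * (t 0 * (t d)⁻¹) * (t 0 * (t p)⁻¹)⁻¹ := by group
    _ = t 0 * (t d)⁻¹ := by rw [hcomm.eq, mul_inv_cancel_right]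

/-- The group generated by the family is a quotient of `M ⋊ ℤ`: the elements `t 0 * (t d)⁻¹` are
the translations and `t 0` is the dilation. -/
theorem exists_eq_mul_inv_mul_zpow (hgen : Subgroup.closure (Set.range t) = ⊤)
    (ht : ∀ p q, t p * t q * (t p)⁻¹ = t (2 • q - p)) (h2 : ∀ x : M, ∃ y, 2 • y = x)
    (hcyc : ∀ d e : M, ∃ g, ∃ n m : ℤ, d = n • g ∧ e = m • g) (x : Q) :
    ∃ (d : M) (k : ℤ), x = t 0 * (t d)⁻¹ * t 0 ^ k := by
  set u : M → Q := fun d => t 0 * (t d)⁻¹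
  have hadd (d e : M) : u d * u e = u (d + e) := by
    simp only [u]
    rw [← mul_inv_add_eq hgen ht h2 hcyc d e]
    group
  have hdil (d : M) : t 0 * u d * (t 0)⁻¹ = u (2 • d) := by
    rw [← sub_zero (2 • d)]
    simp only [u, ← ht 0 d]
    group
  have hu (p : M) : t p = (u p)⁻¹ * t 0 := by simp only [u]; group
  have hneg (p : M) : (u p)⁻¹ = u (-p) :=
    inv_eq_of_mul_eq_one_right (by rw [hadd, add_neg_cancel]; exact mul_inv_cancel _)
  have hx : x ∈ Subgroup.closure (Set.range t) := hgen ▸ Subgroup.mem_top x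
  induction hx using Subgroup.closure_induction_left with
  | one => exact ⟨0, 0, by simp⟩
  | mul_left _ hp z _ ih =>
    obtain ⟨⟨p, rfl⟩, d, k, rfl⟩ := hp, ih
    refine ⟨-p + 2 • d, 1 + k, ?_⟩
    calc t p * (u d * t 0 ^ k) = u (-p) * (t 0 * u d * (t 0)⁻¹) * t 0 ^ (1 + k) := by
          rw [hu p, hneg]; group
      _ = u (-p + 2 • d) * t 0 ^ (1 + k) := by rw [hdil, hadd]
  | inv_mul_cancel _ hp z _ ih =>
    obtain ⟨⟨p, rfl⟩, d, k, rfl⟩ := hp, ih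
    obtain ⟨e, he⟩ := h2 (p + d)
    refine ⟨e, -1 + k, ?_⟩
    calc (t p)⁻¹ * (u d * t 0 ^ k) = (t 0)⁻¹ * (u p * u d) * t 0 * t 0 ^ (-1 + k) := by
          rw [hu p]; group
      _ = u e * t 0 ^ (-1 + k) := by rw [hadd, ← he, ← hdil]; group

end DilationFamily

section DilationGroup

variable {f g : ℝ ≃o ℝ} {p x y : ℝ}

theorem inv_apply_eq : f⁻¹ y = x ↔ y = f x := OrderIso.symm_apply_eq f

theorem commute_of_disjoint_support (h : ∀ x, f x = x ∨ g x = x) : Commute f g :=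
  DFunLike.ext _ _ fun x => DFunLike.congr_fun
    (Equiv.Perm.Disjoint.commute (f := f.toEquiv) (g := g.toEquiv) h).eq x

/-! ### Dyadic piecewise linear homeomorphisms that are trivial near `-∞` -/

/-- The dilation by `2` of the half-line `[p, ∞)`, extended by the identity. -/
noncomputable def rayDilation (p : ℝ) : ℝ ≃o ℝ :=
  StrictMono.orderIsoOfRightInverse (fun x => max x (2 * x - p))
    (fun x y h => max_lt_max h (by linarith)) (fun x => min x ((x + p) / 2)) fun x => by
      rcases le_total x p with h | h
      · simp only [min_eq_left (show x ≤ (x + p) / 2 by linarith)]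
        exact max_eq_left (by linarith)
      · simp only [min_eq_right (show (x + p) / 2 ≤ x by linarith)]
        rw [max_eq_right (by linarith)]
        ring

theorem rayDilation_of_le (h : x ≤ p) : rayDilation p x = x := max_eq_left (by linarith)

theorem rayDilation_of_ge (h : p ≤ x) : rayDilation p x = 2 * x - p := max_eq_right (by linarith)

theorem rayDilation_inv_of_le (h : x ≤ p) : (rayDilation p)⁻¹ x = x :=
  inv_apply_eq.2 (rayDilation_of_le h).symm

theorem rayDilation_inv_of_ge (h : p ≤ x) : (rayDilation p)⁻¹ x = (x + p) / 2 :=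
  inv_apply_eq.2 (by rw [rayDilation_of_ge (by linarith)]; ring)

theorem conj_rayDilation {a c : ℝ} (hf : ∀ x, p ≤ x → f x = a * x + c) :
    f * rayDilation p * f⁻¹ = rayDilation (f p) := by
  rw [mul_inv_eq_iff_eq_mul]
  ext x
  simp only [RelIso.mul_apply]
  rcases le_total x p with h | h
  · rw [rayDilation_of_le h, rayDilation_of_le (f.monotone h)]
  · rw [rayDilation_of_ge h, rayDilation_of_ge (f.monotone h), hf _ (by linarith), hf x h,
      hf p le_rfl]
    ring

/-- The group of dyadic piecewise linear homeomorphisms of the line that are trivial near `-∞`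
(see `mem_dilationGroup_of_isDyadicPL`), given by its generators. -/
noncomputable def dilationGroup : Subgroup (ℝ ≃o ℝ) :=
  Subgroup.closure (Set.range fun p : dyadics => rayDilation p)

theorem rayDilation_mem (hp : IsDyadic p) : rayDilation p ∈ dilationGroup :=
  Subgroup.subset_closure ⟨⟨p, hp⟩, rfl⟩

theorem eventually_atBot_eq_of_mem_dilationGroup (hf : f ∈ dilationGroup) :
    ∀ᶠ x in atBot, f x = x := by
  induction hf using Subgroup.closure_induction with
  | mem _ hx =>
    obtain ⟨p, rfl⟩ := hx
    filter_upwards [eventually_le_atBot (p : ℝ)] with x hx using rayDilation_of_le hx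
  | one => exact .of_forall fun _ => rfl
  | mul f g _ _ hf hg =>
    filter_upwards [hf, hg] with x hf hg
    rw [RelIso.mul_apply, hg, hf]
  | inv f _ hf => exact hf.mono fun x hx => inv_apply_eq.2 hx.symm

/-- The subgroup of the compactly supported elements of `dilationGroup`. -/
noncomputable def compactGroup : Subgroup (ℝ ≃o ℝ) where
  carrier := {f | f ∈ dilationGroup ∧ ∀ᶠ x in atTop, f x = x}
  one_mem' := ⟨one_mem _, .of_forall fun _ => rfl⟩
  mul_mem' := by
    rintro f g ⟨hf, hf'⟩ ⟨hg, hg'⟩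
    refine ⟨mul_mem hf hg, ?_⟩
    filter_upwards [hf', hg'] with x hf hg
    rw [RelIso.mul_apply, hg, hf]
  inv_mem' := fun ⟨hf, hf'⟩ => ⟨inv_mem hf, hf'.mono fun _ hx => inv_apply_eq.2 hx.symm⟩

/-! ### Germs at `+∞` -/

/-- The germ of `f` at `+∞` is the affine map `x ↦ a * x + c`. -/
def AffineAtTop (f : ℝ ≃o ℝ) (a c : ℝ) : Prop := ∀ᶠ x in atTop, f x = a * x + c

theorem affineAtTop_rayDilation (p : ℝ) : AffineAtTop (rayDilation p) 2 (-p) := by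
  filter_upwards [eventually_ge_atTop p] with x hx
  rw [rayDilation_of_ge hx, sub_eq_add_neg]

namespace AffineAtTop

variable {a b c d : ℝ}

theorem mul (hf : AffineAtTop f a c) (hg : AffineAtTop g b d) :
    AffineAtTop (f * g) (a * b) (a * d + c) := by
  filter_upwards [hg, g.tendsto_atTop.eventually hf] with x hg hf
  rw [RelIso.mul_apply, hf, hg]
  ring

theorem inv (ha : a ≠ 0) (hf : AffineAtTop f a c) : AffineAtTop f⁻¹ a⁻¹ (-(a⁻¹ * c)) := by
  filter_upwards [f⁻¹.tendsto_atTop.eventually hf] with x hx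
  rw [RelIso.apply_inv_self] at hx
  conv_rhs => rw [hx]
  field_simp
  ring

theorem zpow (ha : a ≠ 0) (hf : AffineAtTop f a 0) (k : ℤ) : AffineAtTop (f ^ k) (a ^ k) 0 := by
  induction k with
  | zero => exact .of_forall fun x => by simp
  | succ n ih => simpa [zpow_add_one, zpow_add_one₀ ha] using ih.mul hf
  | pred n ih => simpa [zpow_sub_one, zpow_sub_one₀ ha] using ih.mul (hf.inv ha)

theorem unique (hf : AffineAtTop f a c) (hf' : AffineAtTop f b d) : a = b ∧ c = d := by
  obtain ⟨M, hM⟩ := eventually_atTop.1 (hf.and hf')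
  have h₀ := hM M le_rfl
  have h₁ := hM (M + 1) (by linarith)
  have hab : a = b := by linarith
  subst hab
  exact ⟨rfl, by linarith⟩

end AffineAtTop

/-! ### Bumps -/

/-- The compactly supported homeomorphism with slope `2` on `[p, p + d]`, slope `1/2` on
`[p + d, p + 3 * d]` and equal to the identity elsewhere. -/
noncomputable def bump (p d : ℝ) : ℝ ≃o ℝ :=
  rayDilation (p + 3 * d) * (rayDilation (p + 2 * d))⁻¹ * (rayDilation (p + 2 * d))⁻¹ *
    rayDilation p

section Bump

variable {d : ℝ}

theorem bump_of_le (hd : 0 ≤ d) (h : x ≤ p) : bump p d x = x := by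
  simp only [bump, RelIso.mul_apply]
  rw [rayDilation_of_le h, rayDilation_inv_of_le (x := x) (by linarith),
    rayDilation_inv_of_le (x := x) (by linarith), rayDilation_of_le (by linarith)]

theorem bump_of_le_add (h : p ≤ x) (h' : x ≤ p + d) : bump p d x = 2 * x - p := by
  simp only [bump, RelIso.mul_apply]
  rw [rayDilation_of_ge h, rayDilation_inv_of_le (x := 2 * x - p) (by linarith),
    rayDilation_inv_of_le (x := 2 * x - p) (by linarith), rayDilation_of_le (by linarith)]

theorem bump_of_add_le (hd : 0 ≤ d) (h : p + d ≤ x) (h' : x ≤ p + 3 * d) :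
    bump p d x = (x + p + 3 * d) / 2 := by
  simp only [bump, RelIso.mul_apply]
  rw [rayDilation_of_ge (p := p) (x := x) (by linarith),
    rayDilation_inv_of_ge (x := 2 * x - p) (by linarith),
    rayDilation_inv_of_ge (x := (2 * x - p + (p + 2 * d)) / 2) (by linarith),
    rayDilation_of_le (by linarith)]
  ring

theorem bump_of_ge (hd : 0 ≤ d) (h : p + 3 * d ≤ x) : bump p d x = x := by
  simp only [bump, RelIso.mul_apply]
  rw [rayDilation_of_ge (p := p) (x := x) (by linarith),
    rayDilation_inv_of_ge (x := 2 * x - p) (by linarith),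
    rayDilation_inv_of_ge (x := (2 * x - p + (p + 2 * d)) / 2) (by linarith),
    rayDilation_of_ge (by linarith)]
  ring

theorem lt_bump_apply (h : p < x) (h' : x < p + 3 * d) : x < bump p d x := by
  rcases le_total x (p + d) with h₁ | h₁
  · rw [bump_of_le_add h.le h₁]; linarith
  · rw [bump_of_add_le (by linarith) h₁ h'.le]; linarith

theorem bump_eq_rayDilation (hd : 0 ≤ d) (h : x ≤ p + d) : bump p d x = rayDilation p x := by
  rcases le_total x p with h₁ | h₁
  · rw [bump_of_le hd h₁, rayDilation_of_le h₁]
  · rw [bump_of_le_add h₁ h, rayDilation_of_ge h₁]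

theorem bump_mem_compactGroup (hp : IsDyadic p) (hd : IsDyadic d) (hd₀ : 0 ≤ d) :
    bump p d ∈ compactGroup := by
  have h (n : ℤ) : rayDilation (p + n * d) ∈ dilationGroup :=
    rayDilation_mem (hp.add (hd.intCast_mul n))
  have h2 : rayDilation (p + 2 * d) ∈ dilationGroup := by exact_mod_cast h 2
  have h3 : rayDilation (p + 3 * d) ∈ dilationGroup := by exact_mod_cast h 3
  refine ⟨mul_mem (mul_mem (mul_mem h3 (inv_mem h2)) (inv_mem h2)) (rayDilation_mem hp), ?_⟩
  filter_upwards [eventually_ge_atTop (p + 3 * d)] with x hx using bump_of_ge hd₀ hx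

end Bump

/-! ### The group of compactly supported dyadic piecewise linear maps is perfect -/

/-- Truncation: replace each generator `rayDilation p` by a bump with the same initial part. -/
theorem exists_mem_compactGroup_eqOn_Iic (hg : g ∈ dilationGroup) (M : ℝ) :
    ∃ g' ∈ compactGroup, Set.EqOn g' g (Set.Iic M) := by
  have hbump (p : dyadics) (M : ℝ) :
      ∃ b ∈ compactGroup, Set.EqOn b (rayDilation p) (Set.Iic M) := by
    obtain ⟨n, hn⟩ := exists_nat_ge (M - p)
    refine ⟨bump p n, bump_mem_compactGroup p.2 (IsDyadic.intCast n) n.cast_nonneg, fun x hx => ?_⟩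
    exact bump_eq_rayDilation n.cast_nonneg (by linarith [Set.mem_Iic.1 hx])
  induction hg using Subgroup.closure_induction_left with
  | one => exact ⟨1, one_mem _, fun _ _ => rfl⟩
  | mul_left _ hp z _ ih =>
    obtain ⟨⟨p, rfl⟩, g', hg', h⟩ := hp, ih
    obtain ⟨b, hb, hbp⟩ := hbump p (z M)
    exact ⟨b * g', mul_mem hb hg', fun x hx => by
      rw [RelIso.mul_apply, RelIso.mul_apply, h hx, hbp (z.monotone hx)]⟩
  | inv_mul_cancel _ hp z _ ih =>
    obtain ⟨⟨p, rfl⟩, g', hg', h⟩ := hp, ih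
    obtain ⟨b, hb, hbp⟩ := hbump p ((rayDilation p)⁻¹ (z M))
    refine ⟨b⁻¹ * g', mul_mem (inv_mem hb) hg', fun x hx => ?_⟩
    rw [RelIso.mul_apply, RelIso.mul_apply, h hx, inv_apply_eq,
      hbp ((rayDilation p)⁻¹.monotone (z.monotone hx)), RelIso.apply_inv_self]

theorem commutator_mem_of_mem_dilationGroup (hg : g ∈ dilationGroup) (hf : f ∈ compactGroup) :
    ⁅g, f⁆ ∈ ⁅compactGroup, compactGroup⁆ := by
  obtain ⟨M, hM⟩ := eventually_atTop.1 hf.2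
  obtain ⟨g', hg', h⟩ := exists_mem_compactGroup_eqOn_Iic hg M
  have hcomm : Commute (g⁻¹ * g') f := commute_of_disjoint_support fun x =>
    (le_total x M).imp (fun hx => by rw [RelIso.mul_apply, h hx, RelIso.inv_apply_self]) (hM x)
  have heq : g' * f * g'⁻¹ = g * f * g⁻¹ := by
    calc g' * f * g'⁻¹ = g * (g⁻¹ * g' * f) * g'⁻¹ := by group
      _ = g * f * g⁻¹ := by rw [hcomm.eq]; group
  rw [commutatorElement_def, ← heq, ← commutatorElement_def]
  exact Subgroup.commutator_mem_commutator hg' hf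

/-- The derived subgroup of `compactGroup`, as a subgroup of `dilationGroup`. -/
noncomputable abbrev compactDerived : Subgroup dilationGroup :=
  ⁅compactGroup, compactGroup⁆.subgroupOf dilationGroup

instance compactDerived_normal : compactDerived.Normal where
  conj_mem := by
    rintro ⟨f, hf⟩ hfC ⟨g, hg⟩
    rw [Subgroup.mem_subgroupOf] at hfC ⊢
    have h := mul_mem
      (commutator_mem_of_mem_dilationGroup hg (Subgroup.commutator_le_self _ hfC)) hfC
    rwa [commutatorElement_def, inv_mul_cancel_right] at h

theorem mk_mem_center {f : dilationGroup} (hf : (f : ℝ ≃o ℝ) ∈ compactGroup) :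
    (f : dilationGroup ⧸ compactDerived) ∈ Subgroup.center _ := by
  rw [Subgroup.mem_center_iff]
  intro q
  induction q using QuotientGroup.induction_on with
  | H g =>
    rw [← QuotientGroup.mk_mul, ← QuotientGroup.mk_mul, QuotientGroup.eq, Subgroup.mem_subgroupOf]
    have h := inv_mem (commutator_mem_of_mem_dilationGroup (inv_mem g.2) (inv_mem hf))
    rw [commutatorElement_inv, commutatorElement_def] at h
    simpa [mul_assoc] using h

theorem mk_inv_mul_mem_center {f g : dilationGroup} {a c : ℝ} (hf : AffineAtTop f a c)
    (hg : AffineAtTop g a c) :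
    ((g⁻¹ * f : dilationGroup) : dilationGroup ⧸ compactDerived) ∈ Subgroup.center _ := by
  refine mk_mem_center ⟨(g⁻¹ * f).2, ?_⟩
  filter_upwards [hf, hg] with x hf hg
  change (g : ℝ ≃o ℝ)⁻¹ ((f : ℝ ≃o ℝ) x) = x
  rw [inv_apply_eq, hf, hg]

/-- The image of `rayDilation p` in the quotient of `dilationGroup` by `compactDerived`. -/
noncomputable def dilationClass (p : dyadics) : dilationGroup ⧸ compactDerived :=
  (⟨rayDilation p, rayDilation_mem p.2⟩ : dilationGroup)

theorem closure_range_dilationClass : Subgroup.closure (Set.range dilationClass) = ⊤ := by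
  have hrange : Set.range dilationClass = QuotientGroup.mk' compactDerived ''
      Set.range fun p : dyadics => (⟨rayDilation p, rayDilation_mem p.2⟩ : dilationGroup) := by
    rw [← Set.range_comp]; rfl
  have hsub :
      Set.range (fun p : dyadics => (⟨rayDilation p, rayDilation_mem p.2⟩ : dilationGroup)) =
        dilationGroup.subtype ⁻¹' Set.range fun p : dyadics => rayDilation p := by
    ext; simp [Subtype.ext_iff]
  rw [hrange, ← MonoidHom.map_closure, hsub]
  exact (congrArg _ Subgroup.closure_closure_coe_preimage).trans <|
    (MonoidHom.range_eq_map _).symm.trans (QuotientGroup.range_mk' _)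

/-- For `q < p` the map `rayDilation p` is not affine on `[q, ∞)`; it is replaced by a map with the
same germ at `+∞` that is. -/
theorem dilationClass_conj (p q : dyadics) :
    dilationClass p * dilationClass q * (dilationClass p)⁻¹ = dilationClass (2 • q - p) := by
  obtain ⟨w, hwp, hw⟩ : ∃ w : dilationGroup, AffineAtTop w 2 (-p) ∧
      (w : ℝ ≃o ℝ) * rayDilation q * (w : ℝ ≃o ℝ)⁻¹ = rayDilation ((2 • q - p : dyadics) : ℝ) := by
    have hcast : ((2 • q - p : dyadics) : ℝ) = 2 * q - p := by simp
    rcases le_total (p : ℝ) q with h | h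
    · refine ⟨⟨rayDilation p, rayDilation_mem p.2⟩, affineAtTop_rayDilation p, ?_⟩
      rw [hcast, ← rayDilation_of_ge h]
      exact conj_rayDilation fun x hx => (rayDilation_of_ge (h.trans hx)).trans (sub_eq_add_neg _ _)
    · have haff (x : ℝ) (hx : q ≤ x) : (rayDilation (2 * q - p) * (rayDilation (3 * q - 2 * p))⁻¹ *
          rayDilation q) x = 2 * x + -p := by
        rw [RelIso.mul_apply, RelIso.mul_apply, rayDilation_of_ge hx,
          rayDilation_inv_of_ge (by linarith), rayDilation_of_ge (by linarith)]
        ring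
      refine ⟨⟨_, mul_mem (mul_mem (rayDilation_mem ?_) (inv_mem (rayDilation_mem ?_)))
        (rayDilation_mem q.2)⟩, eventually_atTop.2 ⟨q, haff⟩, ?_⟩
      · exact hcast ▸ (2 • q - p).2
      · exact (show ((3 • q - 2 • p : dyadics) : ℝ) = 3 * q - 2 * p by simp) ▸ (3 • q - 2 • p).2
      · rw [conj_rayDilation haff, haff q le_rfl, hcast, sub_eq_add_neg]
  have hz := Subgroup.mem_center_iff.1 (mk_inv_mul_mem_center
    (g := ⟨rayDilation p, rayDilation_mem p.2⟩) hwp (affineAtTop_rayDilation p)) (dilationClass q)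
  have hconj : (w : dilationGroup ⧸ compactDerived) * dilationClass q *
      (w : dilationGroup ⧸ compactDerived)⁻¹ = dilationClass (2 • q - p) :=
    congrArg QuotientGroup.mk (Subtype.ext hw)
  have hmk : (w : dilationGroup ⧸ compactDerived) = dilationClass p *
      ((⟨rayDilation p, rayDilation_mem p.2⟩⁻¹ * w : dilationGroup) :
        dilationGroup ⧸ compactDerived) := (mul_inv_cancel_left _ _).symm
  rw [← hconj, hmk, mul_assoc _ _ (dilationClass q), ← hz]
  group

theorem compactGroup_le_commutator : compactGroup ≤ ⁅compactGroup, compactGroup⁆ := by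
  intro f hf
  obtain ⟨d, k, h⟩ := exists_eq_mul_inv_mul_zpow closure_range_dilationClass dilationClass_conj
    exists_dyadic_nsmul_two_eq exists_dyadic_zsmul_eq
    ((⟨f, hf.1⟩ : dilationGroup) : dilationGroup ⧸ compactDerived)
  have hmem : f⁻¹ * (rayDilation 0 * (rayDilation d)⁻¹ * rayDilation 0 ^ k) ∈
      ⁅compactGroup, compactGroup⁆ := by
    have h' := Subgroup.mem_subgroupOf.1 (QuotientGroup.eq.1 h)
    simpa using h'
  have hcompact := (mul_mem hf (Subgroup.commutator_le_self _ hmem)).2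
  rw [mul_inv_cancel_left] at hcompact
  have h0 : AffineAtTop (rayDilation 0) 2 0 := by simpa using affineAtTop_rayDilation 0
  obtain ⟨hk, hd⟩ := AffineAtTop.unique
    (hcompact.mono fun x hx => show _ = 1 * x + 0 by rw [hx, one_mul, add_zero])
    ((h0.mul ((affineAtTop_rayDilation d).inv two_ne_zero)).mul (h0.zpow two_ne_zero k))
  have hk0 : k = 0 :=
    (zpow_eq_one_iff_right₀ (zero_le_two (α := ℝ)) (by norm_num)).1 (by simpa using hk.symm)
  have hd0 : d = 0 := by simpa using hd.symm
  simpa [hk0, hd0] using inv_mem hmem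

end DilationGroup

/-! ### Conjugation by reflections and translations -/

section Reflection

/-- Conjugation by the reflection `x ↦ s - x`; it sends an order automorphism to an order
automorphism although the reflection itself is not one. -/
noncomputable def reflConj (s : ℝ) : (ℝ ≃o ℝ) →* (ℝ ≃o ℝ) where
  toFun f :=
    { toFun := fun x => s - f (s - x)
      invFun := fun x => s - f⁻¹ (s - x)
      left_inv := fun x => by
        change s - f⁻¹ (s - (s - f (s - x))) = x
        rw [sub_sub_cancel, RelIso.inv_apply_self, sub_sub_cancel]
      right_inv := fun x => by
        change s - f (s - (s - f⁻¹ (s - x))) = x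
        rw [sub_sub_cancel, RelIso.apply_inv_self, sub_sub_cancel]
      map_rel_iff' := by
        intro x y
        simp only [Equiv.coe_fn_mk, sub_le_sub_iff_left, f.le_iff_le] }
  map_one' := by
    ext x
    exact sub_sub_cancel s x
  map_mul' f g := by
    ext x
    change s - f (g (s - x)) = s - f (s - (s - g (s - x)))
    rw [sub_sub_cancel]

theorem reflConj_apply (s : ℝ) (f : ℝ ≃o ℝ) (x : ℝ) : reflConj s f x = s - f (s - x) := rfl

theorem reflConj_reflConj (s : ℝ) (f : ℝ ≃o ℝ) : reflConj s (reflConj s f) = f := by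
  ext x
  simp [reflConj_apply]

/-- Conjugation by the translation `x ↦ x + c`, written as a product of two reflections so that
its properties follow from those of `reflConj`. -/
noncomputable def translConj (c : ℝ) : (ℝ ≃o ℝ) →* (ℝ ≃o ℝ) :=
  (reflConj (c / 2)).comp (reflConj (-c / 2))

theorem translConj_apply (c : ℝ) (f : ℝ ≃o ℝ) (x : ℝ) : translConj c f x = f (x - c) + c := by
  change c / 2 - (-c / 2 - f (-c / 2 - (c / 2 - x))) = _
  ring_nf

theorem translConj_neg_translConj (c : ℝ) (f : ℝ ≃o ℝ) :
    translConj (-c) (translConj c f) = f := by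
  ext x
  simp [translConj_apply]

theorem translConj_translConj_neg (c : ℝ) (f : ℝ ≃o ℝ) :
    translConj c (translConj (-c) f) = f := by
  ext x
  simp [translConj_apply]

end Reflection

/-! ### Piecewise linear characterisation of the generated groups -/

section DyadicPL

variable {f g h : ℝ ≃o ℝ} {J : Set ℝ} {S : Finset ℝ} {p x : ℝ}

/-- On the set `J`, the map `f` is affine with slope an integer power of `2`. -/
def DyadicAffineOn (f : ℝ ≃o ℝ) (J : Set ℝ) : Prop :=
  ∃ (k : ℤ) (c : ℝ), ∀ x ∈ J, f x = 2 ^ k * x + c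

/-- The set `J` does not extend to both sides of any point of `S`. -/
def NotCutBy (J : Set ℝ) (S : Finset ℝ) : Prop :=
  ∀ s ∈ S, s ∈ upperBounds J ∨ s ∈ lowerBounds J

/-- Piecewise linearity with finitely many breakpoints, all dyadic, and slopes powers of `2`:
away from the finite set `S`, the map is affine on every set not cut by `S`. -/
def IsDyadicPL (f : ℝ ≃o ℝ) : Prop :=
  ∃ S : Finset ℝ, (∀ s ∈ S, IsDyadic s) ∧ ∀ J : Set ℝ, NotCutBy J S → DyadicAffineOn f J

theorem DyadicAffineOn.mono {J' : Set ℝ} (hf : DyadicAffineOn f J') (h : J ⊆ J') :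
    DyadicAffineOn f J :=
  let ⟨k, c, hkc⟩ := hf
  ⟨k, c, fun x hx => hkc x (h hx)⟩

theorem dyadicAffineOn_one (J : Set ℝ) : DyadicAffineOn 1 J :=
  ⟨0, 0, fun x _ => by simp⟩

theorem DyadicAffineOn.mul (hf : DyadicAffineOn f (g '' J)) (hg : DyadicAffineOn g J) :
    DyadicAffineOn (f * g) J := by
  obtain ⟨k, c, hf⟩ := hf
  obtain ⟨l, d, hg⟩ := hg
  refine ⟨k + l, 2 ^ k * d + c, fun x hx => ?_⟩
  rw [RelIso.mul_apply, hf _ (mem_image_of_mem g hx), hg x hx, zpow_add₀ two_ne_zero]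
  ring

theorem DyadicAffineOn.inv (hf : DyadicAffineOn f ((f⁻¹ : ℝ ≃o ℝ) '' J)) :
    DyadicAffineOn f⁻¹ J := by
  obtain ⟨k, c, hf⟩ := hf
  refine ⟨-k, -(2 ^ (-k) * c), fun x hx => ?_⟩
  have hfx := hf _ (mem_image_of_mem (f⁻¹ : ℝ ≃o ℝ) hx)
  rw [RelIso.apply_inv_self] at hfx
  rw [zpow_neg]
  field_simp
  linarith

theorem NotCutBy.image {T : Finset ℝ} (hJ : NotCutBy J S) (hT : ∀ t ∈ T, g⁻¹ t ∈ S) :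
    NotCutBy (g '' J) T := by
  intro t ht
  rw [← RelIso.apply_inv_self g t]
  exact (hJ _ (hT t ht)).imp (fun h => g.monotone.mem_upperBounds_image h)
    (fun h => g.monotone.mem_lowerBounds_image h)

theorem isDyadicPL_one : IsDyadicPL 1 :=
  ⟨∅, by simp, fun J _ => dyadicAffineOn_one J⟩

theorem IsDyadicPL.mul (hf : IsDyadicPL f) (hg : IsDyadicPL g)
    (hd : ∀ x, IsDyadic (g x) ↔ IsDyadic x) : IsDyadicPL (f * g) := by
  classical
  obtain ⟨S, hS, hf⟩ := hf
  obtain ⟨T, hT, hg⟩ := hg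
  refine ⟨T ∪ S.image (g⁻¹ : ℝ ≃o ℝ), ?_,
    fun J hJ => .mul (hf _ (hJ.image fun s hs => ?_)) (hg _ ?_)⟩
  · simp only [Finset.mem_union, Finset.mem_image]
    rintro s (hs | ⟨t, ht, rfl⟩)
    · exact hT s hs
    · rw [← hd, RelIso.apply_inv_self]
      exact hS t ht
  · exact Finset.mem_union_right _ (Finset.mem_image_of_mem _ hs)
  · exact fun t ht => hJ t (Finset.mem_union_left _ ht)

theorem IsDyadicPL.inv (hf : IsDyadicPL f) (hd : ∀ x, IsDyadic (f x) ↔ IsDyadic x) :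
    IsDyadicPL f⁻¹ := by
  classical
  obtain ⟨S, hS, hf⟩ := hf
  refine ⟨S.image f, ?_, fun J hJ => .inv (hf _ (hJ.image fun s hs => ?_))⟩
  · simp only [Finset.mem_image]
    rintro s ⟨t, ht, rfl⟩
    exact (hd t).2 (hS t ht)
  · rw [inv_inv]
    exact Finset.mem_image_of_mem _ hs

theorem isDyadic_rayDilation_iff (hp : IsDyadic p) :
    IsDyadic (rayDilation p x) ↔ IsDyadic x := by
  rcases le_total x p with h | h
  · rw [rayDilation_of_le h]
  · rw [rayDilation_of_ge h]
    refine ⟨fun hx => ?_, fun hx => (by simpa using hx.intCast_mul 2 : IsDyadic (2 * x)).sub hp⟩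
    simpa using (hx.add hp).half

theorem isDyadicPL_rayDilation (hp : IsDyadic p) : IsDyadicPL (rayDilation p) := by
  refine ⟨{p}, by simpa using hp, fun J hJ => ?_⟩
  rcases hJ p (Finset.mem_singleton_self p) with h | h
  · exact ⟨0, 0, fun x hx => by simp [rayDilation_of_le (h hx)]⟩
  · exact ⟨1, -p, fun x hx => by rw [rayDilation_of_ge (h hx), zpow_one, sub_eq_add_neg]⟩

theorem isDyadic_apply_iff (hf : f ∈ dilationGroup) (x : ℝ) : IsDyadic (f x) ↔ IsDyadic x := by
  induction hf using Subgroup.closure_induction generalizing x with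
  | mem f hf =>
    obtain ⟨⟨p, hp⟩, rfl⟩ := hf
    exact isDyadic_rayDilation_iff hp
  | one => rfl
  | mul f g _ _ hf hg => rw [RelIso.mul_apply, hf, hg]
  | inv f _ hf => rw [← hf, RelIso.apply_inv_self]

theorem isDyadicPL_of_mem_dilationGroup (hf : f ∈ dilationGroup) : IsDyadicPL f := by
  induction hf using Subgroup.closure_induction with
  | mem f hf =>
    obtain ⟨⟨p, hp⟩, rfl⟩ := hf
    exact isDyadicPL_rayDilation hp
  | one => exact isDyadicPL_one
  | mul f g _ hg ihf ihg => exact ihf.mul ihg (isDyadic_apply_iff hg)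
  | inv f hf ih => exact ih.inv (isDyadic_apply_iff hf)

theorem rayDilation_zpow_of_le (h : x ≤ p) (k : ℤ) : (rayDilation p ^ k) x = x := by
  induction k using Int.induction_on with
  | zero => rfl
  | succ n ih => rw [zpow_add_one, RelIso.mul_apply, rayDilation_of_le h, ih]
  | pred n ih => rw [zpow_sub_one, RelIso.mul_apply, rayDilation_inv_of_le h, ih]

theorem rayDilation_zpow_of_ge (h : p ≤ x) (k : ℤ) :
    (rayDilation p ^ k) x = 2 ^ k * (x - p) + p := by
  induction k using Int.induction_on generalizing x with
  | zero => simp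
  | succ n ih =>
    rw [zpow_add_one, RelIso.mul_apply, rayDilation_of_ge h, ih (by linarith),
      zpow_add_one₀ two_ne_zero]
    ring
  | pred n ih =>
    rw [zpow_sub_one, RelIso.mul_apply, rayDilation_inv_of_ge h, ih (by linarith),
      zpow_sub_one₀ two_ne_zero]
    ring

theorem exists_mem_dilationGroup_eqOn_union (hh : h ∈ dilationGroup) (hp : IsDyadic p)
    (hfh : EqOn f h (Iic p)) (hhp : DyadicAffineOn h (Ici p)) (hf : DyadicAffineOn f J)
    (hpJ : IsLeast J p) :
    ∃ h' ∈ dilationGroup, EqOn f h' (Iic p ∪ J) ∧ DyadicAffineOn h' (Ici p) := by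
  obtain ⟨k, c, hk⟩ := hhp
  obtain ⟨l, d, hl⟩ := hf
  have hfp : f p = h p := hfh (mem_Iic.2 le_rfl)
  have hr : ∀ x ∈ Ici p, (rayDilation (h p) ^ (l - k) * h) x = 2 ^ l * x + d := by
    intro x hx
    have hkx := hk x hx
    have hkp := hk p (mem_Ici.2 le_rfl)
    have hlp := hl p hpJ.1
    rw [RelIso.mul_apply, rayDilation_zpow_of_ge (h.monotone hx), hkx,
      zpow_sub₀ two_ne_zero]
    rw [hfp] at hlp
    field_simp
    linear_combination (2 : ℝ) ^ k * hlp - (2 : ℝ) ^ l * hkp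
  refine ⟨rayDilation (h p) ^ (l - k) * h, mul_mem (zpow_mem (rayDilation_mem
    ((isDyadic_apply_iff hh p).2 hp)) _) hh, ?_, l, d, hr⟩
  rintro x (hx | hx)
  · rw [hfh hx, RelIso.mul_apply, rayDilation_zpow_of_le (h.monotone hx)]
  · rw [hl x hx, hr x (hpJ.2 hx)]

theorem eqOn_id_of_dyadicAffineOn_Iic {b : ℝ} (hf : DyadicAffineOn f (Iic b))
    (hbot : ∀ᶠ x in atBot, f x = x) : EqOn f id (Iic b) := by
  obtain ⟨k, c, hkc⟩ := hf
  obtain ⟨M, hM⟩ := eventually_atBot.1 (hbot.and (eventually_le_atBot b))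
  have h₀ := hkc M (hM M le_rfl).2
  have h₁ := hkc (M - 1) (hM (M - 1) (by linarith)).2
  rw [(hM _ (by linarith)).1] at h₀ h₁
  have hk : (2 : ℝ) ^ k = 1 := by linarith
  intro x hx
  rw [hk] at h₀
  rw [hkc x hx, hk]
  simp only [id]
  linarith

theorem exists_mem_dilationGroup_eqOn_Iic_of_affine (hS : ∀ s ∈ S, IsDyadic s)
    (hbot : ∀ᶠ x in atBot, f x = x) (b : ℝ)
    (hf : ∀ J ⊆ Iic b, NotCutBy J S → DyadicAffineOn f J) :
    ∃ h ∈ dilationGroup, EqOn f h (Iic b) ∧ DyadicAffineOn h (Ici b) := by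
  induction S using Finset.induction_on_max generalizing b with
  | empty =>
    exact ⟨1, one_mem _, eqOn_id_of_dyadicAffineOn_Iic (hf _ subset_rfl (by simp [NotCutBy])) hbot,
      dyadicAffineOn_one _⟩
  | insert p T hTp ih =>
    rw [Finset.forall_mem_insert] at hS
    replace ih := ih hS.2
    have hcut : ∀ J ⊆ Iic p, NotCutBy J T → NotCutBy J (insert p T) := fun J hJ hJT =>
      Finset.forall_mem_insert _ _ _ |>.2 ⟨.inl fun x hx => hJ hx, hJT⟩
    rcases le_or_gt b p with hbp | hpb
    · exact ih b fun J hJ hJT => hf J hJ (hcut J (hJ.trans (Iic_subset_Iic.2 hbp)) hJT)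
    · obtain ⟨h, hh, hfh, hhp⟩ := ih p fun J hJ hJT =>
        hf J (hJ.trans (Iic_subset_Iic.2 hpb.le)) (hcut J hJ hJT)
      have hIcc : DyadicAffineOn f (Icc p b) := hf _ (fun x hx => hx.2) <|
        Finset.forall_mem_insert _ _ _ |>.2 ⟨.inr fun x hx => hx.1,
          fun t ht => .inr fun x hx => (hTp t ht).le.trans hx.1⟩
      obtain ⟨h', hh', hfh', hhp'⟩ :=
        exists_mem_dilationGroup_eqOn_union hh hS.1 hfh hhp hIcc (isLeast_Icc hpb.le)
      rw [Iic_union_Icc_eq_Iic hpb.le] at hfh'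
      exact ⟨h', hh', hfh', hhp'.mono (Ici_subset_Ici.2 hpb.le)⟩

theorem mem_dilationGroup_of_isDyadicPL (hf : IsDyadicPL f) (hbot : ∀ᶠ x in atBot, f x = x) :
    f ∈ dilationGroup := by
  obtain ⟨S, hS, hf⟩ := hf
  obtain ⟨b, hb⟩ := S.bddAbove
  obtain ⟨p, hp, hbp, -⟩ := IsDyadic.exists_between (lt_add_one b)
  obtain ⟨h, hh, hfh, hhp⟩ :=
    exists_mem_dilationGroup_eqOn_Iic_of_affine hS hbot p fun J _ => hf J
  obtain ⟨h', hh', hfh', -⟩ := exists_mem_dilationGroup_eqOn_union hh hp hfh hhp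
    (hf (Ici p) fun s hs => .inr fun x hx => ((hb hs).trans hbp.le).trans hx) isLeast_Ici
  rw [Iic_union_Ici] at hfh'
  rwa [show f = h' from RelIso.ext fun x => hfh' (mem_univ x)]

theorem mem_compactGroup_iff :
    f ∈ compactGroup ↔ IsDyadicPL f ∧ (∀ᶠ x in atBot, f x = x) ∧ ∀ᶠ x in atTop, f x = x :=
  ⟨fun h => ⟨isDyadicPL_of_mem_dilationGroup h.1,
      eventually_atBot_eq_of_mem_dilationGroup h.1, h.2⟩,
    fun h => ⟨mem_dilationGroup_of_isDyadicPL h.1 h.2.1, h.2.2⟩⟩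

theorem IsDyadicPL.reflConj {s : ℝ} (hs : IsDyadic s) (hf : IsDyadicPL f) :
    IsDyadicPL (reflConj s f) := by
  classical
  obtain ⟨S, hS, hf⟩ := hf
  refine ⟨S.image (s - ·), ?_, fun J hJ => ?_⟩
  · simp only [Finset.mem_image]
    rintro _ ⟨x, hx, rfl⟩
    exact hs.sub (hS x hx)
  · have hcut : NotCutBy ((s - ·) '' J) S := fun t ht =>
      (hJ _ (Finset.mem_image_of_mem _ ht)).symm.imp
        (by rintro h _ ⟨x, hx, rfl⟩; linarith [h hx])
        (by rintro h _ ⟨x, hx, rfl⟩; linarith [h hx])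
    obtain ⟨k, c, hkc⟩ := hf _ hcut
    refine ⟨k, s - 2 ^ k * s - c, fun x hx => ?_⟩
    rw [reflConj_apply, hkc _ (mem_image_of_mem _ hx)]
    ring

theorem reflConj_mem_compactGroup {s : ℝ} (hs : IsDyadic s) (hf : f ∈ compactGroup) :
    reflConj s f ∈ compactGroup := by
  obtain ⟨hPL, hbot, htop⟩ := mem_compactGroup_iff.1 hf
  refine mem_compactGroup_iff.2 ⟨hPL.reflConj hs, ?_, ?_⟩
  · have hlim := tendsto_atTop_add_const_left _ s tendsto_neg_atBot_atTop
    filter_upwards [hlim.eventually htop] with x hx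
    rw [reflConj_apply, sub_eq_add_neg s x, hx]
    ring
  · have hlim := tendsto_atBot_add_const_left _ s tendsto_neg_atTop_atBot
    filter_upwards [hlim.eventually hbot] with x hx
    rw [reflConj_apply, sub_eq_add_neg s x, hx]
    ring

theorem translConj_mem_compactGroup {c : ℝ} (hc : IsDyadic c) (hf : f ∈ compactGroup) :
    translConj c f ∈ compactGroup :=
  reflConj_mem_compactGroup hc.half (reflConj_mem_compactGroup hc.neg.half hf)

end DyadicPL

/-! ### Maps supported in the unit cell -/

section InnerGroup

variable {f : ℝ ≃o ℝ} {a b c d e s x y z : ℝ}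

/-- The order automorphisms of the line supported in `[a, b]`. -/
def supportedIn (a b : ℝ) : Subgroup (ℝ ≃o ℝ) := fixingSubgroup (ℝ ≃o ℝ) (Ioo a b)ᶜ

theorem mem_supportedIn : f ∈ supportedIn a b ↔ ∀ x, x ≤ a ∨ b ≤ x → f x = x := by
  refine (mem_fixingSubgroup_iff _).trans (forall_congr' fun x => imp_congr_left ?_)
  rw [mem_compl_iff, mem_Ioo, not_and_or, not_lt, not_lt]

theorem apply_left_of_mem_supportedIn (hf : f ∈ supportedIn a b) : f a = a :=
  mem_supportedIn.1 hf a (.inl le_rfl)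

theorem apply_right_of_mem_supportedIn (hf : f ∈ supportedIn a b) : f b = b :=
  mem_supportedIn.1 hf b (.inr le_rfl)

theorem supportedIn_mono (ha : c ≤ a) (hb : b ≤ d) : supportedIn a b ≤ supportedIn c d :=
  fixingSubgroup_antitone _ _ (compl_subset_compl.2 (Ioo_subset_Ioo ha hb))

theorem conj_mem_supportedIn (hf : f ∈ supportedIn a b) (g : ℝ ≃o ℝ) :
    g * f * g⁻¹ ∈ supportedIn (g a) (g b) := by
  rw [mem_supportedIn] at hf ⊢
  intro x hx
  obtain ⟨y, rfl⟩ := g.surjective x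
  rw [g.le_iff_le, g.le_iff_le] at hx
  rw [RelIso.mul_apply, RelIso.mul_apply, RelIso.inv_apply_self, hf y hx]

theorem reflConj_mem_supportedIn (hf : f ∈ supportedIn a b) :
    reflConj s f ∈ supportedIn (s - b) (s - a) := by
  rw [mem_supportedIn] at hf ⊢
  intro x hx
  rw [reflConj_apply, hf (s - x) (hx.symm.imp (by intro; linarith) (by intro; linarith)),
    sub_sub_cancel]

theorem translConj_mem_supportedIn (hf : f ∈ supportedIn a b) :
    translConj s f ∈ supportedIn (a + s) (b + s) := by
  rw [mem_supportedIn] at hf ⊢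
  intro x hx
  rw [translConj_apply, hf (x - s) (hx.imp (by intro; linarith) (by intro; linarith)),
    sub_add_cancel]

theorem bump_mem_supportedIn (hd : 0 ≤ d) : bump a d ∈ supportedIn a (a + 3 * d) :=
  mem_supportedIn.2 fun _ hx => hx.elim (bump_of_le hd) (bump_of_ge hd)

theorem mem_Icc_iff_of_mem_supportedIn (hf : f ∈ supportedIn a b) :
    f x ∈ Icc a b ↔ x ∈ Icc a b := by
  simp only [mem_Icc]
  conv_lhs => rw [← apply_left_of_mem_supportedIn hf, ← apply_right_of_mem_supportedIn hf]
  rw [f.le_iff_le, f.le_iff_le]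

theorem exists_lt_pow_apply (hf : ∀ x ∈ Ioo a b, x < f x) (hy : a < y) (hz : z < b) :
    ∃ n : ℕ, z < (f ^ n) y := by
  by_contra! hle
  set A : Set ℝ := range fun n : ℕ => (f ^ n) y
  have hne : A.Nonempty := range_nonempty _
  have hA : sSup A ≤ z := csSup_le hne (forall_mem_range.2 hle)
  have hle_sup : ∀ n : ℕ, (f ^ n) y ≤ sSup A := fun n =>
    le_csSup ⟨z, forall_mem_range.2 hle⟩ (mem_range_self n)
  have hsup := hf (sSup A) ⟨hy.trans_le (hle_sup 0), hA.trans_lt hz⟩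
  have hinv : f⁻¹ (sSup A) < sSup A := by rwa [← f.lt_iff_lt, RelIso.apply_inv_self]
  obtain ⟨_, ⟨n, rfl⟩, hn⟩ := exists_lt_of_lt_csSup hne hinv
  rw [← f.lt_iff_lt, RelIso.apply_inv_self, ← RelIso.mul_apply, ← pow_succ'] at hn
  exact hn.not_ge (hle_sup (n + 1))

theorem exists_mem_compactGroup_lt_apply (hay : a < y) (hyz : y ≤ z) (hzd : z < d) :
    ∃ g ∈ compactGroup ⊓ supportedIn a d, z < g y := by
  obtain ⟨p, hp, hap, hpy⟩ := IsDyadic.exists_between hay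
  obtain ⟨e, he, hze, hed⟩ := IsDyadic.exists_between (show (z - p) / 3 < (d - p) / 3 by linarith)
  have he₀ : 0 ≤ e := by linarith
  have hzr : z < p + 3 * e := by linarith
  obtain ⟨n, hn⟩ := exists_lt_pow_apply (fun x hx => lt_bump_apply hx.1 hx.2) hpy hzr
  have hs : bump p e ∈ compactGroup ⊓ supportedIn a d := ⟨bump_mem_compactGroup hp he he₀,
    supportedIn_mono hap.le (by linarith) (bump_mem_supportedIn he₀)⟩
  exact ⟨bump p e ^ n, pow_mem hs n, hn⟩

/-- The elements of `compactGroup` supported in a compact subset of the open unit cell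
`(-1/2, 1/2)`. -/
noncomputable def innerGroup : Subgroup (ℝ ≃o ℝ) where
  carrier := {f | f ∈ compactGroup ∧ ∃ e < 1 / 2, f ∈ supportedIn (-e) e}
  one_mem' := ⟨one_mem _, 0, by norm_num, one_mem _⟩
  mul_mem' := by
    rintro f g ⟨hf, e, he, hfe⟩ ⟨hg, e', he', hge⟩
    exact ⟨mul_mem hf hg, max e e', max_lt he he', mul_mem
      (supportedIn_mono (neg_le_neg (le_max_left _ _)) (le_max_left _ _) hfe)
      (supportedIn_mono (neg_le_neg (le_max_right _ _)) (le_max_right _ _) hge)⟩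
  inv_mem' := by
    rintro f ⟨hf, e, he, hfe⟩
    exact ⟨inv_mem hf, e, he, inv_mem hfe⟩

theorem mem_innerGroup_of_mem_supportedIn (hf : f ∈ compactGroup) (hs : f ∈ supportedIn a b)
    (ha : -(1 / 2) < a) (hb : b < 1 / 2) : f ∈ innerGroup :=
  ⟨hf, max (-a) b, max_lt (by linarith) hb,
    supportedIn_mono (neg_le.1 (le_max_left _ _)) (le_max_right _ _) hs⟩

theorem innerGroup_le_supportedIn : innerGroup ≤ supportedIn (-(1 / 2)) (1 / 2) := by
  rintro f ⟨-, e, he, hf⟩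
  exact supportedIn_mono (by linarith) he.le hf

theorem reflConj_zero_mem_innerGroup (hf : f ∈ innerGroup) : reflConj 0 f ∈ innerGroup := by
  obtain ⟨hf, e, he, hfe⟩ := hf
  exact ⟨reflConj_mem_compactGroup .zero hf, e, he,
    by simpa using reflConj_mem_supportedIn (s := 0) hfe⟩

theorem exists_mem_innerGroup_map_Icc (hc : -(1 / 2) < c) (hcd : c ≤ d) (hd : d < 1 / 2)
    (ha : -(1 / 2) < a) (hab : a < b) (hb : b < 1 / 2) :
    ∃ γ ∈ innerGroup, a ≤ γ c ∧ γ d ≤ b := by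
  obtain ⟨l, hl, hlac⟩ := exists_between (lt_min ha hc)
  obtain ⟨r, hbdr, hr⟩ := exists_between (max_lt hb hd)
  rw [lt_min_iff] at hlac
  rw [max_lt_iff] at hbdr
  obtain ⟨g, ⟨hg, hgs⟩, hbg⟩ := exists_mem_compactGroup_lt_apply (hlac.1.trans hab)
    (le_max_left b d) (max_lt hbdr.1 hbdr.2)
  have hgd : g⁻¹ d < b := by
    rw [← g.lt_iff_lt, RelIso.apply_inv_self]
    exact (le_max_right b d).trans_lt hbg
  have hlg : l < g⁻¹ c := by
    rw [← g.lt_iff_lt, RelIso.apply_inv_self, apply_left_of_mem_supportedIn hgs]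
    exact hlac.2
  obtain ⟨h, ⟨hh, hhs⟩, hah⟩ := exists_mem_compactGroup_lt_apply hlg (le_max_left _ a)
    (max_lt (((g⁻¹).monotone hcd).trans_lt hgd) hab)
  refine ⟨h * g⁻¹, mem_innerGroup_of_mem_supportedIn (mul_mem hh (inv_mem hg))
    (mul_mem (supportedIn_mono le_rfl hbdr.1.le hhs) (inv_mem hgs)) hl hr,
    (le_max_right _ a).trans hah.le, ?_⟩
  rw [RelIso.mul_apply, ← apply_right_of_mem_supportedIn hhs]
  exact h.monotone hgd.le

theorem eventually_mem_supportedIn (hf : f ∈ compactGroup) :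
    ∀ᶠ M in atTop, f ∈ supportedIn (-M) M := by
  obtain ⟨-, hbot, htop⟩ := mem_compactGroup_iff.1 hf
  filter_upwards [tendsto_neg_atTop_atBot.eventually (eventually_forall_le_atBot.2 hbot),
    eventually_forall_ge_atTop.2 htop] with M hM hM'
  exact mem_supportedIn.2 fun x hx => hx.elim (hM x) (hM' x)

theorem eventually_mem_commutator_supportedIn (hf : f ∈ ⁅compactGroup, compactGroup⁆) :
    ∀ᶠ M in atTop, f ∈ ⁅compactGroup ⊓ supportedIn (-M) M, compactGroup ⊓ supportedIn (-M) M⁆ := by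
  rw [Subgroup.commutator_def] at hf
  induction hf using Subgroup.closure_induction with
  | mem _ hx =>
    obtain ⟨g, hg, h, hh, rfl⟩ := hx
    filter_upwards [eventually_mem_supportedIn hg, eventually_mem_supportedIn hh] with M hgM hhM
    exact Subgroup.commutator_mem_commutator ⟨hg, hgM⟩ ⟨hh, hhM⟩
  | one => exact .of_forall fun M => one_mem _
  | mul _ _ _ _ ih ih' =>
    filter_upwards [ih, ih'] with M hM hM'
    exact mul_mem hM hM'
  | inv _ _ ih => exact ih.mono fun M hM => inv_mem hM

theorem exists_mem_compactGroup_squeeze (he₀ : 0 ≤ e) (he : e < 1 / 2) (hx : 1 / 2 ≤ x) :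
    ∃ γ ∈ compactGroup, (∀ y ∈ Icc (-e) e, γ y = y) ∧ -(1 / 2) < γ (-x) ∧ γ x < 1 / 2 := by
  obtain ⟨z, hez, hz⟩ := exists_between he
  obtain ⟨g, ⟨hg, hgs⟩, hxg⟩ :=
    exists_mem_compactGroup_lt_apply hez (hz.le.trans hx) (lt_add_one x)
  have hfix : ∀ y ≤ e, g⁻¹ y = y := fun y hy => mem_supportedIn.1 (inv_mem hgs) y (.inl hy)
  have hgx : g⁻¹ x < z := by rwa [← g.lt_iff_lt, RelIso.apply_inv_self]
  have heg : e ≤ g⁻¹ x := by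
    rw [← hfix e le_rfl]
    exact (g⁻¹).monotone (he.le.trans hx)
  refine ⟨g⁻¹ * reflConj 0 g⁻¹, mul_mem (inv_mem hg)
    (reflConj_mem_compactGroup .zero (inv_mem hg)), fun y hy => ?_, ?_, ?_⟩ <;>
  rw [RelIso.mul_apply, reflConj_apply]
  · rw [hfix (0 - y) (by linarith [hy.1]), sub_sub_cancel, hfix y hy.2]
  · rw [zero_sub (-x), neg_neg, zero_sub, hfix _ (by linarith)]
    linarith
  · rw [hfix (0 - x) (by linarith), sub_sub_cancel]
    exact hgx.trans hz

theorem innerGroup_le_commutator : innerGroup ≤ ⁅innerGroup, innerGroup⁆ := by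
  rintro f ⟨hf, e', he', hfe'⟩
  obtain ⟨e, he₀, he, hfe⟩ : ∃ e, 0 ≤ e ∧ e < 1 / 2 ∧ f ∈ supportedIn (-e) e :=
    ⟨max e' 0, le_max_right _ _, max_lt he' (by norm_num),
      supportedIn_mono (neg_le_neg (le_max_left _ _)) (le_max_left _ _) hfe'⟩
  obtain ⟨M, hfM, hM⟩ := ((eventually_mem_commutator_supportedIn
    (compactGroup_le_commutator hf)).and (eventually_ge_atTop (1 / 2))).exists
  obtain ⟨γ, hγ, hγe, hγl, hγr⟩ := exists_mem_compactGroup_squeeze he₀ he hM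
  have hγf : γ * f * γ⁻¹ = f := by
    refine mul_inv_eq_iff_eq_mul.2 (commute_of_disjoint_support fun x => ?_)
    by_cases hx : x ∈ Ioo (-e) e
    · exact .inl (hγe x (Ioo_subset_Icc_self hx))
    · rw [mem_Ioo, not_and_or, not_lt, not_lt] at hx
      exact .inr (mem_supportedIn.1 hfe x hx)
  have hconj : (compactGroup ⊓ supportedIn (-M) M).map (MulAut.conj γ).toMonoidHom ≤
      innerGroup := by
    rintro _ ⟨g, ⟨hg, hgM⟩, rfl⟩
    exact mem_innerGroup_of_mem_supportedIn (mul_mem (mul_mem hγ hg) (inv_mem hγ))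
      (conj_mem_supportedIn hgM γ) hγl hγr
  have hmap := Subgroup.mem_map_of_mem (MulAut.conj γ).toMonoidHom hfM
  rw [Subgroup.map_commutator] at hmap
  exact hγf ▸ Subgroup.commutator_mono hconj hconj hmap

end InnerGroup

/-! ### Slopes at the ends of the unit cell -/

section EndSlope

variable {f g : ℝ ≃o ℝ} {k l : ℤ} {x : ℝ}

theorem mem_supportedIn_of_inThompsonF (hf : InThompsonF f) : f ∈ supportedIn 0 1 := by
  have hclosed : IsClosed {x | f x = x} := isClosed_eq f.continuous continuous_id
  have hfix : closure (Icc (0 : ℝ) 1)ᶜ ⊆ {x | f x = x} := hclosed.closure_subset_iff.2 hf.1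
  rw [closure_compl, interior_Icc] at hfix
  exact (mem_fixingSubgroup_iff _).2 fun x hx => hfix hx

theorem isDyadicPL_of_inThompsonF (hf : InThompsonF f) : IsDyadicPL f := by
  classical
  have hfix := mem_supportedIn.1 (mem_supportedIn_of_inThompsonF hf)
  obtain ⟨-, m, x, h0, h1, -, hdy, haff⟩ := hf
  refine ⟨Finset.univ.image x, by simpa using hdy, fun J hJ => ?_⟩
  have hcut : ∀ i, x i ∈ upperBounds J ∨ x i ∈ lowerBounds J := fun i =>
    hJ _ (Finset.mem_image_of_mem _ (Finset.mem_univ i))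
  have hid : (∀ y ∈ J, y ≤ 0 ∨ 1 ≤ y) → DyadicAffineOn f J := fun h =>
    ⟨0, 0, fun y hy => by simp [hfix y (h y hy)]⟩
  by_cases hlast : x (Fin.last m) ∈ lowerBounds J
  · exact hid fun y hy => .inr (h1 ▸ hlast hy)
  rcases hcut 0 with hzero | hzero
  · exact hid fun y hy => .inl (h0 ▸ hzero hy)
  obtain ⟨j, hj, hj'⟩ : ∃ j : Fin m, x j.castSucc ∈ lowerBounds J ∧ x j.succ ∉ lowerBounds J := by
    by_contra! hstep
    exact hlast (Fin.induction hzero hstep (Fin.last m))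
  obtain ⟨k, c, hkc⟩ := haff j
  exact ⟨k, c, fun y hy => hkc y ⟨hj hy, (hcut j.succ).resolve_right hj' hy⟩⟩

theorem exists_orderEmbedding_range_eq {α : Type*} [LinearOrder α] {T : Finset α} {a b : α}
    (ha : IsLeast (T : Set α) a) (hb : IsGreatest (T : Set α) b) :
    ∃ (m : ℕ) (x : Fin (m + 1) ↪o α), x 0 = a ∧ x (Fin.last m) = b ∧ range x = T := by
  obtain ⟨m, hm⟩ := Nat.exists_eq_succ_of_ne_zero (Finset.card_ne_zero_of_mem ha.1)
  have hrange := T.range_orderEmbOfFin hm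
  refine ⟨m, T.orderEmbOfFin hm, ?_, ?_, hrange⟩
  · refine IsLeast.unique ⟨mem_range_self _, ?_⟩ (hrange ▸ ha)
    exact forall_mem_range.2 fun i => (T.orderEmbOfFin hm).monotone (Fin.zero_le i)
  · refine IsGreatest.unique ⟨mem_range_self _, ?_⟩ (hrange ▸ hb)
    exact forall_mem_range.2 fun i => (T.orderEmbOfFin hm).monotone (Fin.le_last i)

theorem inThompsonF_of_isDyadicPL (hf : IsDyadicPL f) (hs : f ∈ supportedIn 0 1) :
    InThompsonF f := by
  classical
  obtain ⟨S, hS, hf⟩ := hf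
  refine ⟨fun x hx => (mem_fixingSubgroup_iff _).1 hs x fun h => hx (Ioo_subset_Icc_self h), ?_⟩
  set T : Finset ℝ := {0, 1} ∪ {s ∈ S | s ∈ Ioo 0 1}
  have hT : ∀ t ∈ T, IsDyadic t ∧ t ∈ Icc 0 1 := by
    simp only [T, Finset.mem_union, Finset.mem_insert, Finset.mem_singleton, Finset.mem_filter]
    rintro t ((rfl | rfl) | ⟨ht, ht'⟩)
    · exact ⟨.zero, by simp⟩
    · exact ⟨.one, by simp⟩
    · exact ⟨hS t ht, Ioo_subset_Icc_self ht'⟩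
  obtain ⟨m, x, h0, h1, hrange⟩ := exists_orderEmbedding_range_eq (T := T)
    ⟨by simp [T], fun t ht => (hT t ht).2.1⟩ ⟨by simp [T], fun t ht => (hT t ht).2.2⟩
  have hxT : ∀ i, x i ∈ T := fun i => by
    rw [← Finset.mem_coe, ← hrange]
    exact mem_range_self i
  refine ⟨m, x, h0, h1, x.strictMono, fun i => (hT _ (hxT i)).1, fun i => hf _ fun s hs => ?_⟩
  rcases le_or_gt s (x i.castSucc) with hl | hl
  · exact .inr fun t ht => hl.trans ht.1
  rcases le_or_gt (x i.succ) s with hr | hr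
  · exact .inl fun t ht => ht.2.trans hr
  have hsT : s ∈ T := Finset.mem_union_right _ (Finset.mem_filter.2
    ⟨hs, (hT _ (hxT _)).2.1.trans_lt hl, hr.trans_le (hT _ (hxT _)).2.2⟩)
  obtain ⟨j, rfl⟩ : s ∈ range x := hrange ▸ hsT
  exact absurd (Fin.castSucc_lt_iff_succ_le.1 (x.lt_iff_lt.1 hl)) (x.lt_iff_lt.1 hr).not_ge

/-- The map `f` fixes both ends of the unit cell `[-1/2, 1/2]` and has slope `2 ^ k` there,
on the inner side. -/
def HasEndSlope (k : ℤ) (f : ℝ ≃o ℝ) : Prop :=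
  ∀ᶠ t in 𝓝[≥] (0 : ℝ), f (-(1 / 2) + t) = -(1 / 2) + 2 ^ k * t ∧
    f (1 / 2 - t) = 1 / 2 - 2 ^ k * t

theorem tendsto_mul_nhdsGE_zero {c : ℝ} (hc : 0 ≤ c) : Tendsto (c * ·) (𝓝[≥] 0) (𝓝[≥] 0) :=
  tendsto_nhdsWithin_of_tendsto_nhds_of_eventually_within _
    ((Continuous.tendsto' (by fun_prop) 0 0 (mul_zero c)).mono_left nhdsWithin_le_nhds)
    (eventually_mem_nhdsWithin.mono fun _ ht => mul_nonneg hc ht)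

namespace HasEndSlope

theorem one : HasEndSlope 0 1 := .of_forall fun t => by simp

theorem mul (hf : HasEndSlope k f) (hg : HasEndSlope l g) : HasEndSlope (k + l) (f * g) := by
  filter_upwards [hg, (tendsto_mul_nhdsGE_zero (zpow_nonneg zero_le_two l)).eventually hf]
    with t ⟨hg₁, hg₂⟩ ⟨hf₁, hf₂⟩
  rw [RelIso.mul_apply, RelIso.mul_apply, hg₁, hg₂, hf₁, hf₂, zpow_add₀ two_ne_zero, mul_assoc]
  exact ⟨rfl, rfl⟩

theorem inv (hf : HasEndSlope k f) : HasEndSlope (-k) f⁻¹ := by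
  filter_upwards [(tendsto_mul_nhdsGE_zero (zpow_nonneg zero_le_two (-k))).eventually hf]
    with t ⟨hf₁, hf₂⟩
  have hcancel : (2 : ℝ) ^ k * (2 ^ (-k) * t) = t := by
    rw [← mul_assoc, ← zpow_add₀ two_ne_zero, add_neg_cancel, zpow_zero, one_mul]
  rw [inv_apply_eq, inv_apply_eq, hf₁, hf₂, hcancel]
  exact ⟨rfl, rfl⟩

theorem zpow (hf : HasEndSlope 1 f) (k : ℤ) : HasEndSlope k (f ^ k) := by
  induction k using Int.induction_on with
  | zero => exact one
  | succ n ih => rw [zpow_add_one]; exact ih.mul hf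
  | pred n ih => rw [zpow_sub_one]; exact ih.mul hf.inv

theorem mem_innerGroup (hk : HasEndSlope 0 f) (hf : f ∈ compactGroup)
    (hs : f ∈ supportedIn (-(1 / 2)) (1 / 2)) : f ∈ innerGroup := by
  obtain ⟨ε, hε, hkε⟩ := mem_nhdsGE_iff_exists_Icc_subset.1 hk
  rw [mem_supportedIn] at hs
  refine mem_innerGroup_of_mem_supportedIn (a := -(1 / 2) + ε) (b := 1 / 2 - ε) hf
    (mem_supportedIn.2 fun x hx => ?_) (by linarith) (by linarith)
  rcases hx with hx | hx
  · rcases le_total x (-(1 / 2)) with h | h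
    · exact hs x (.inl h)
    · simpa using (hkε (show x + 1 / 2 ∈ Icc 0 ε from ⟨by linarith, by linarith⟩)).1
  · rcases le_total (1 / 2) x with h | h
    · exact hs x (.inr h)
    · simpa using (hkε (show 1 / 2 - x ∈ Icc 0 ε from ⟨by linarith, by linarith⟩)).2

end HasEndSlope

theorem translConj_mem_of_inH (hf : InH f) :
    translConj (-(1 / 2)) f ∈ compactGroup ⊓ supportedIn (-(1 / 2)) (1 / 2) := by
  have hs := mem_supportedIn_of_inThompsonF hf.1
  rw [Subgroup.mem_inf]
  refine ⟨translConj_mem_compactGroup IsDyadic.one.half.neg (mem_compactGroup_iff.2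
    ⟨isDyadicPL_of_inThompsonF hf.1, ?_, ?_⟩), ?_⟩
  · exact (eventually_le_atBot 0).mono fun x hx => mem_supportedIn.1 hs x (.inl hx)
  · exact (eventually_ge_atTop 1).mono fun x hx => mem_supportedIn.1 hs x (.inr hx)
  · exact supportedIn_mono (by norm_num) (by norm_num) (translConj_mem_supportedIn hs)

theorem exists_hasEndSlope_of_inH (hf : InH f) :
    ∃ k, HasEndSlope k (translConj (-(1 / 2)) f) := by
  obtain ⟨-, k, ε, hε, h₀, h₁⟩ := hf
  refine ⟨k, ?_⟩
  filter_upwards [Icc_mem_nhdsGE hε] with t ht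
  rw [translConj_apply, translConj_apply, show -(1 / 2) + t - -(1 / 2) = t by ring,
    show 1 / 2 - t - -(1 / 2) = 1 - t by ring, h₀ t ht,
    h₁ (1 - t) ⟨by linarith [ht.2], by linarith [ht.1]⟩]
  constructor <;> ring

theorem inH_translConj_of_mem_innerGroup (hf : f ∈ innerGroup) :
    InH (translConj (1 / 2) f) := by
  have hs := translConj_mem_supportedIn (s := 1 / 2) (innerGroup_le_supportedIn hf)
  obtain ⟨hf, e, he, hfe⟩ := hf
  refine ⟨inThompsonF_of_isDyadicPL (mem_compactGroup_iff.1
      (translConj_mem_compactGroup IsDyadic.one.half hf)).1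
    (supportedIn_mono (by norm_num) (by norm_num) hs), 0, 1 / 2 - e, by linarith,
    fun t ht => ?_, fun t ht => ?_⟩
  · rw [translConj_apply, mem_supportedIn.1 hfe _ (.inl (by linarith [ht.2]))]
    ring
  · rw [translConj_apply, mem_supportedIn.1 hfe _ (.inr (by linarith [ht.1]))]
    ring

/-- An odd element of `innerGroup` with slope `2` around `0`. -/
noncomputable def centerDilation : ℝ ≃o ℝ := bump 0 (1 / 16) * reflConj 0 (bump 0 (1 / 16))

/-- The element acting near each end of the unit cell `[-1/2, 1/2]` as a translate of
`centerDilation`; it has slope `2` at both ends. -/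
noncomputable def endDilation : ℝ ≃o ℝ :=
  translConj (-(1 / 2)) (bump 0 (1 / 16)) * translConj (1 / 2) (reflConj 0 (bump 0 (1 / 16)))

section Dilation

/-- The one-sided building block of `centerDilation` and `endDilation`. -/
local notation "β" => bump 0 (1 / 16)

theorem unitBump_mem_compactGroup : β ∈ compactGroup :=
  bump_mem_compactGroup .zero ⟨1, 4, by norm_num⟩ (by norm_num)

theorem unitBump_mem_supportedIn : β ∈ supportedIn 0 (1 / 4) :=
  supportedIn_mono le_rfl (by norm_num) (bump_mem_supportedIn (by norm_num))

theorem reflConj_unitBump_mem_supportedIn : reflConj 0 β ∈ supportedIn (-(1 / 4)) 0 := by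
  simpa using reflConj_mem_supportedIn (s := 0) unitBump_mem_supportedIn

theorem centerDilation_mem_innerGroup : centerDilation ∈ innerGroup :=
  mem_innerGroup_of_mem_supportedIn (a := -(1 / 4)) (b := 1 / 4)
    (mul_mem unitBump_mem_compactGroup
      (reflConj_mem_compactGroup .zero unitBump_mem_compactGroup))
    (mul_mem (supportedIn_mono (by norm_num) le_rfl unitBump_mem_supportedIn)
      (supportedIn_mono le_rfl (by norm_num) reflConj_unitBump_mem_supportedIn))
    (by norm_num) (by norm_num)

theorem centerDilation_of_nonneg (hx : 0 ≤ x) : centerDilation x = β x := by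
  rw [centerDilation, RelIso.mul_apply,
    mem_supportedIn.1 reflConj_unitBump_mem_supportedIn x (.inr hx)]

theorem reflConj_centerDilation : reflConj 0 centerDilation = centerDilation := by
  rw [centerDilation, map_mul, reflConj_reflConj]
  exact commute_of_disjoint_support fun x => (le_total 0 x).imp
    (fun h => mem_supportedIn.1 reflConj_unitBump_mem_supportedIn x (.inr h))
    (fun h => mem_supportedIn.1 unitBump_mem_supportedIn x (.inl h))

theorem centerDilation_neg (x : ℝ) : centerDilation (-x) = -centerDilation x := by
  conv_lhs => rw [← reflConj_centerDilation]
  rw [reflConj_apply, zero_sub, zero_sub, neg_neg]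

theorem centerDilation_ne_one : centerDilation ≠ 1 := by
  intro h
  have hx : centerDilation (1 / 16) = 1 / 16 := by rw [h, RelIso.one_apply]
  rw [centerDilation_of_nonneg (by norm_num),
    bump_of_le_add (by norm_num) (by norm_num)] at hx
  norm_num at hx

theorem endDilation_mem : endDilation ∈ compactGroup ⊓ supportedIn (-(1 / 2)) (1 / 2) := by
  rw [Subgroup.mem_inf]
  exact ⟨mul_mem (translConj_mem_compactGroup IsDyadic.one.half.neg unitBump_mem_compactGroup)
      (translConj_mem_compactGroup IsDyadic.one.half
        (reflConj_mem_compactGroup .zero unitBump_mem_compactGroup)),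
    mul_mem (supportedIn_mono (by norm_num) (by norm_num)
        (translConj_mem_supportedIn unitBump_mem_supportedIn))
      (supportedIn_mono (by norm_num) (by norm_num)
        (translConj_mem_supportedIn reflConj_unitBump_mem_supportedIn))⟩

theorem endDilation_of_nonpos (hx : x ∈ Icc (-(1 / 2)) 0) :
    endDilation x = centerDilation (x + 1 / 2) - 1 / 2 := by
  rw [endDilation, RelIso.mul_apply, translConj_apply (1 / 2),
    mem_supportedIn.1 reflConj_unitBump_mem_supportedIn _ (.inl (by linarith [hx.2])),
    sub_add_cancel, translConj_apply, centerDilation_of_nonneg (by linarith [hx.1])]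
  ring_nf

theorem endDilation_of_nonneg (hx : x ∈ Icc 0 (1 / 2)) :
    endDilation x = centerDilation (x - 1 / 2) + 1 / 2 := by
  have hγ : centerDilation (x - 1 / 2) = reflConj 0 β (x - 1 / 2) := by
    rw [reflConj_apply, ← centerDilation_of_nonneg (by linarith [hx.2]), zero_sub, zero_sub,
      centerDilation_neg, neg_neg]
  have hle : -(1 / 2) ≤ centerDilation (x - 1 / 2) := by
    rw [← apply_left_of_mem_supportedIn
      (innerGroup_le_supportedIn centerDilation_mem_innerGroup)]
    exact centerDilation.monotone (by linarith [hx.1])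
  rw [endDilation, RelIso.mul_apply, translConj_apply (1 / 2), ← hγ, translConj_apply,
    mem_supportedIn.1 unitBump_mem_supportedIn _ (.inr (by linarith))]
  ring

theorem hasEndSlope_endDilation : HasEndSlope 1 endDilation := by
  filter_upwards [Icc_mem_nhdsGE (show (0 : ℝ) < 1 / 16 by norm_num)] with t ht
  have hβ : centerDilation t = 2 * t := by
    rw [centerDilation_of_nonneg ht.1, bump_of_le_add ht.1 (by linarith [ht.2]), sub_zero]
  rw [endDilation_of_nonpos ⟨by linarith [ht.1], by linarith [ht.2]⟩,
    endDilation_of_nonneg ⟨by linarith [ht.2], by linarith [ht.1]⟩, neg_add_cancel_comm,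
    sub_sub_cancel_left, centerDilation_neg, hβ, zpow_one]
  constructor <;> ring

end Dilation

end EndSlope

/-! ### Unit cells and their overlaps -/

theorem commutatorElement_mem {G : Type*} [Group G] {H : Subgroup G} {a b : G} (ha : a ∈ H)
    (hb : b ∈ H) : ⁅a, b⁆ ∈ H :=
  H.commutator_le_self (Subgroup.commutator_mem_commutator ha hb)

theorem prodMk_commutatorElement_mem {G G' : Type*} [Group G] [Group G'] {H : Subgroup (G × G')}
    {a b : G} {a' b' : G'} (ha : (a, a') ∈ H) (hb : (b, b') ∈ H) : (⁅a, b⁆, ⁅a', b'⁆) ∈ H := by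
  simpa [commutatorElement_def] using commutatorElement_mem ha hb

section ChartGraph

variable {φ ψ θ : ℝ → ℝ} {s t : Set ℝ} {f f' g : ℝ ≃o ℝ}

/-- The pairs `(g, f)` such that `f` preserves `s` and `g` acts on `φ '' s`, read in the
chart `φ`, as `f`. -/
def chartGraph (φ : ℝ → ℝ) (s : Set ℝ) : Subgroup ((ℝ ≃o ℝ) × (ℝ ≃o ℝ)) where
  carrier := {x | (∀ y, x.2 y ∈ s ↔ y ∈ s) ∧ ∀ y ∈ s, x.1 (φ y) = φ (x.2 y)}
  one_mem' := ⟨fun _ => .rfl, fun _ _ => rfl⟩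
  mul_mem' hx hy := ⟨fun z => (hx.1 _).trans (hy.1 z), fun z hz => by
    rw [Prod.fst_mul, Prod.snd_mul, RelIso.mul_apply, RelIso.mul_apply, hy.2 z hz,
      hx.2 _ ((hy.1 z).2 hz)]⟩
  inv_mem' {x} hx := by
    have hs (z : ℝ) : x.2⁻¹ z ∈ s ↔ z ∈ s := by rw [← hx.1, RelIso.apply_inv_self]
    refine ⟨hs, fun z hz => ?_⟩
    rw [Prod.fst_inv, Prod.snd_inv, inv_apply_eq, hx.2 _ ((hs z).2 hz), RelIso.apply_inv_self]

theorem mem_chartGraph :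
    (g, f) ∈ chartGraph φ s ↔ (∀ y, f y ∈ s ↔ y ∈ s) ∧ ∀ y ∈ s, g (φ y) = φ (f y) :=
  .rfl

theorem chartGraph_of_semiconj (hφ : ∀ y, φ y = ψ (θ y)) (hf : ∀ y, θ (f' y) = f (θ y))
    (hs : ∀ y, θ y ∈ t ↔ y ∈ s) (h : (g, f) ∈ chartGraph ψ t) : (g, f') ∈ chartGraph φ s :=
  ⟨fun y => by rw [← hs, hf, h.1, hs],
    fun y hy => by rw [hφ, h.2 _ ((hs y).2 hy), hφ, hf]⟩

theorem chartGraph_of_eqOn (hf : EqOn f f' s) (h : (g, f) ∈ chartGraph φ s) :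
    (g, f') ∈ chartGraph φ s := by
  rw [mem_chartGraph] at h ⊢
  refine ⟨fun y => ⟨fun hy => ?_, fun hy => hf hy ▸ (h.1 y).2 hy⟩,
    fun y hy => hf hy ▸ h.2 y hy⟩
  have hz : (f⁻¹ : ℝ ≃o ℝ) (f' y) ∈ s := by rwa [← h.1, RelIso.apply_inv_self]
  have hzy : f' ((f⁻¹ : ℝ ≃o ℝ) (f' y)) = f' y := by rw [← hf hz, RelIso.apply_inv_self]
  rwa [f'.injective hzy] at hz

theorem chartGraph_union (hs : (g, f) ∈ chartGraph φ s) (ht : (g, f) ∈ chartGraph φ t) :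
    (g, f) ∈ chartGraph φ (s ∪ t) :=
  ⟨fun y => or_congr (hs.1 y) (ht.1 y), fun y => Or.rec (hs.2 y) (ht.2 y)⟩

theorem chartGraph_inter (hs : (g, f) ∈ chartGraph φ s) (ht : ∀ y, f y ∈ t ↔ y ∈ t) :
    (g, f) ∈ chartGraph φ (s ∩ t) :=
  ⟨fun y => and_congr (hs.1 y) (ht y), fun y hy => hs.2 y hy.1⟩

end ChartGraph

/-- The affine parametrisation, by `[-1/2, 1/2]`, of the unit cell centred at the
half-integer `m / 2`; the sign `σ m` gives its orientation. -/
noncomputable def cellChart (σ : ℤ → ℤˣ) (m : ℤ) (y : ℝ) : ℝ := m / 2 + ((σ m : ℤ) : ℝ) * y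

section CellChart

variable {σ : ℤ → ℤˣ} {m : ℤ} {f f' g : ℝ ≃o ℝ}

theorem units_eq_or_eq_neg (u v : ℤˣ) : u = v ∨ u = -v :=
  (eq_or_ne u v).imp_right Int.units_ne_iff_eq_neg.1

theorem cellChart_neg (y : ℝ) : cellChart (-σ) m y = cellChart σ m (-y) := by
  simp [cellChart]

theorem chartGraph_cellChart_neg {a b : ℝ}
    (h : (g, f) ∈ chartGraph (cellChart σ m) (Icc a b)) :
    (g, reflConj 0 f) ∈ chartGraph (cellChart (-σ) m) (Icc (-b) (-a)) :=
  chartGraph_of_semiconj (θ := Neg.neg) cellChart_neg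
    (fun y => by rw [reflConj_apply, zero_sub, zero_sub, neg_neg])
    (fun y => by rw [mem_Icc, mem_Icc, le_neg, neg_le, and_comm]) h

/-- Two cells whose centres are `1/2` apart overlap in half a cell. -/
theorem chartGraph_translConj (hσ : σ (m + σ m) = σ m) (hf₀ : f 0 = 0)
    (h : (g, f) ∈ chartGraph (cellChart σ (m + σ m)) (Icc (-(1 / 2)) (1 / 2))) :
    (g, translConj (1 / 2) f) ∈ chartGraph (cellChart σ m) (Icc 0 (1 / 2)) := by
  refine chartGraph_of_semiconj (θ := (· - 1 / 2)) (fun y => ?_) (fun y => ?_) (fun y => ?_)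
    (chartGraph_inter h (t := Iic 0) fun y => ?_)
  · rw [cellChart, cellChart, hσ]
    push_cast
    ring
  · rw [translConj_apply, add_sub_cancel_right]
  · rw [mem_inter_iff, mem_Icc, mem_Icc, mem_Iic]
    exact ⟨fun hy => ⟨by linarith [hy.1.1], by linarith [hy.2]⟩,
      fun hy => ⟨⟨by linarith [hy.1], by linarith [hy.2]⟩, by linarith [hy.2]⟩⟩
  · rw [mem_Iic, mem_Iic, ← f.le_iff_le (x := y), hf₀]

theorem chartGraph_reflConj (hσ : σ (m + σ m) = -σ m) (hf₀ : f 0 = 0)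
    (h : (g, f) ∈ chartGraph (cellChart σ (m + σ m)) (Icc (-(1 / 2)) (1 / 2))) :
    (g, reflConj (1 / 2) f) ∈ chartGraph (cellChart σ m) (Icc 0 (1 / 2)) := by
  refine chartGraph_of_semiconj (θ := (1 / 2 - ·)) (fun y => ?_) (fun y => ?_) (fun y => ?_)
    (chartGraph_inter h (t := Ici 0) fun y => ?_)
  · rw [cellChart, cellChart, hσ]
    push_cast
    ring
  · rw [reflConj_apply, sub_sub_cancel]
  · rw [mem_inter_iff, mem_Icc, mem_Icc, mem_Ici]
    exact ⟨fun hy => ⟨by linarith [hy.1.2], by linarith [hy.2]⟩,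
      fun hy => ⟨⟨by linarith [hy.2], by linarith [hy.1]⟩, by linarith [hy.2]⟩⟩
  · rw [mem_Ici, mem_Ici, ← f.le_iff_le (y := y), hf₀]

theorem exists_chartGraph_right (hf₀ : f 0 = 0)
    (h : (g, f) ∈ chartGraph (cellChart σ (m + σ m)) (Icc (-(1 / 2)) (1 / 2))) :
    ∃ f', (g, f') ∈ chartGraph (cellChart σ m) (Icc 0 (1 / 2)) :=
  (units_eq_or_eq_neg (σ (m + σ m)) (σ m)).elim
    (fun hσ => ⟨_, chartGraph_translConj hσ hf₀ h⟩)
    (fun hσ => ⟨_, chartGraph_reflConj hσ hf₀ h⟩)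

theorem exists_chartGraph_left (hf₀ : f 0 = 0)
    (h : (g, f) ∈ chartGraph (cellChart σ (m - σ m)) (Icc (-(1 / 2)) (1 / 2))) :
    ∃ f', (g, f') ∈ chartGraph (cellChart σ m) (Icc (-(1 / 2)) 0) := by
  have h' : (g, reflConj 0 f) ∈ chartGraph (cellChart (-σ) (m + (-σ) m))
      (Icc (-(1 / 2)) (1 / 2)) := by
    simpa [sub_eq_add_neg] using chartGraph_cellChart_neg h
  obtain ⟨f', hf'⟩ := exists_chartGraph_right (by rw [reflConj_apply]; simp [hf₀]) h'
  exact ⟨_, by simpa using chartGraph_cellChart_neg hf'⟩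

/-- Only the right half of the cell matters, since `f` is trivial on the left half. -/
theorem chartGraph_commutator {h h' : ℝ ≃o ℝ} (hf : f ∈ supportedIn 0 (1 / 2))
    (hg : (g, f) ∈ chartGraph (cellChart σ m) (Icc (-(1 / 2)) (1 / 2)))
    (hright : (h, f') ∈ chartGraph (cellChart σ m) (Icc 0 (1 / 2)))
    (hleft : (h, h') ∈ chartGraph (cellChart σ m) (Icc (-(1 / 2)) 0))
    (hc : ⁅f, f'⁆ ∈ supportedIn 0 (1 / 2)) :
    (⁅g, h⁆, ⁅f, f'⁆) ∈ chartGraph (cellChart σ m) (Icc (-(1 / 2)) (1 / 2)) := by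
  have hfix (y : ℝ) (hy : y ∈ Icc (-(1 / 2)) 0) {k : ℝ ≃o ℝ} (hk : k ∈ supportedIn 0 (1 / 2)) :
      k y = y := mem_supportedIn.1 hk y (.inl hy.2)
  have hgl : (g, 1) ∈ chartGraph (cellChart σ m) (Icc (-(1 / 2)) 0) :=
    ⟨fun _ => .rfl, fun y hy => by
      rw [hg.2 y (Icc_subset_Icc_right (by norm_num) hy)]; exact congrArg _ (hfix y hy hf)⟩
  have hgr : (g, f) ∈ chartGraph (cellChart σ m) (Icc 0 (1 / 2)) :=
    ⟨fun _ => mem_Icc_iff_of_mem_supportedIn hf,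
      fun y hy => hg.2 y (Icc_subset_Icc_left (by norm_num) hy)⟩
  have hl : (⁅g, h⁆, ⁅(1 : ℝ ≃o ℝ), h'⁆) ∈ chartGraph (cellChart σ m) (Icc (-(1 / 2)) 0) :=
    prodMk_commutatorElement_mem hgl hleft
  rw [commutatorElement_one_left] at hl
  rw [← Icc_union_Icc_eq_Icc (b := 0) (by norm_num) (by norm_num)]
  exact chartGraph_union (chartGraph_of_eqOn (fun y hy => (hfix y hy hc).symm) hl)
    (prodMk_commutatorElement_mem hgr hright)

end CellChart

/-! ### Lifts to the cells of one parity -/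

/-- The pairs `(g, f)` such that `g` is the lift of `f` to the cells of index congruent to `p`
modulo `2`: it acts as `f` on those with index in `E` and trivially on the others. Cells of
consecutive indices overlap, and those of a given parity tile the line. -/
def liftGraph (σ : ℤ → ℤˣ) (p : ℤ) (E : Set ℤ) : Subgroup ((ℝ ≃o ℝ) × (ℝ ≃o ℝ)) where
  carrier := {x | ∀ m, 2 ∣ m - p →
    (x.1, E.mulIndicator (fun _ => x.2) m) ∈ chartGraph (cellChart σ m) (Icc (-(1 / 2)) (1 / 2))}
  one_mem' m _ := by
    rw [Prod.snd_one, mulIndicator_one]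
    exact one_mem _
  mul_mem' hx hy m hm := by
    rw [Prod.snd_mul, mulIndicator_mul]
    exact mul_mem (hx m hm) (hy m hm)
  inv_mem' hx m hm := by
    rw [Prod.snd_inv, mulIndicator_inv]
    exact inv_mem (hx m hm)

section LiftGraph

variable {σ : ℤ → ℤˣ} {p m : ℤ} {E E' : Set ℤ} {f f' g g' : ℝ ≃o ℝ}

theorem mem_liftGraph : (g, f) ∈ liftGraph σ p E ↔ ∀ m, 2 ∣ m - p →
    (g, E.mulIndicator (fun _ => f) m) ∈
      chartGraph (cellChart σ m) (Icc (-(1 / 2)) (1 / 2)) :=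
  .rfl

theorem mem_liftGraph_univ : (g, f) ∈ liftGraph σ p univ ↔ ∀ m, 2 ∣ m - p →
    (g, f) ∈ chartGraph (cellChart σ m) (Icc (-(1 / 2)) (1 / 2)) := by
  simp [mem_liftGraph]

theorem apply_cellChart_of_mem (h : (g, f) ∈ liftGraph σ p E) (hm : 2 ∣ m - p) (hE : m ∈ E)
    {y : ℝ} (hy : y ∈ Icc (-(1 / 2)) (1 / 2)) : g (cellChart σ m y) = cellChart σ m (f y) := by
  simpa [hE] using (h m hm).2 y hy

theorem apply_cellChart_of_notMem (h : (g, f) ∈ liftGraph σ p E) (hm : 2 ∣ m - p) (hE : m ∉ E)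
    {y : ℝ} (hy : y ∈ Icc (-(1 / 2)) (1 / 2)) : g (cellChart σ m y) = cellChart σ m y := by
  simpa [hE] using (h m hm).2 y hy

theorem exists_cellChart_eq (σ : ℤ → ℤˣ) (p : ℤ) (x : ℝ) :
    ∃ m, 2 ∣ m - p ∧ ∃ y ∈ Icc (-(1 / 2)) (1 / 2), cellChart σ m y = x := by
  have hle := Int.floor_le (x + 1 / 2 - p / 2)
  have hlt := Int.lt_floor_add_one (x + 1 / 2 - p / 2)
  refine ⟨2 * ⌊x + 1 / 2 - p / 2⌋ + p, by omega, ?_⟩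
  rcases Int.units_eq_one_or (σ (2 * ⌊x + 1 / 2 - p / 2⌋ + p)) with h | h
  · refine ⟨x - ⌊x + 1 / 2 - p / 2⌋ - p / 2, ⟨by linarith, by linarith⟩, ?_⟩
    rw [cellChart, h]
    push_cast
    ring
  · refine ⟨⌊x + 1 / 2 - p / 2⌋ + p / 2 - x, ⟨by linarith, by linarith⟩, ?_⟩
    rw [cellChart, h]
    push_cast
    ring

theorem eq_of_mem_liftGraph (h : (g, f) ∈ liftGraph σ p E) (h' : (g', f) ∈ liftGraph σ p E) :
    g = g' := by
  ext x
  obtain ⟨m, hm, y, hy, rfl⟩ := exists_cellChart_eq σ p x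
  exact ((h m hm).2 y hy).trans ((h' m hm).2 y hy).symm

theorem liftGraph_neg (h : (g, f) ∈ liftGraph σ p E) :
    (g, reflConj 0 f) ∈ liftGraph (-σ) p E := fun m hm => by
  have := chartGraph_cellChart_neg (h m hm)
  by_cases hE : m ∈ E <;> simpa [hE] using this

theorem liftGraph_commutator (h : (g, f) ∈ liftGraph σ p E) (h' : (g', f') ∈ liftGraph σ p E') :
    (⁅g, g'⁆, ⁅f, f'⁆) ∈ liftGraph σ p (E ∩ E') := fun m hm => by
  have := prodMk_commutatorElement_mem (h m hm) (h' m hm)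
  by_cases hE : m ∈ E <;> by_cases hE' : m ∈ E' <;> simpa [hE, hE'] using this

theorem liftGraph_conj (h : (g, f) ∈ liftGraph σ p univ) (h' : (g', f') ∈ liftGraph σ p E) :
    (g * g' * g⁻¹, f * f' * f⁻¹) ∈ liftGraph σ p E := fun m hm => by
  have := mul_mem (mul_mem (h m hm) (h' m hm)) (inv_mem (h m hm))
  by_cases hE : m ∈ E <;> simpa [hE] using this

theorem liftGraph_compl (h : (g, f) ∈ liftGraph σ p univ) (h' : (g', f) ∈ liftGraph σ p E) :
    (g * g'⁻¹, f) ∈ liftGraph σ p Eᶜ := fun m hm => by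
  have := mul_mem (h m hm) (inv_mem (h' m hm))
  by_cases hE : m ∈ E <;> simpa [hE] using this

theorem liftGraph_union (h : (g, f) ∈ liftGraph σ p E) (h' : (g', f) ∈ liftGraph σ p E')
    (hd : Disjoint E E') : (g * g', f) ∈ liftGraph σ p (E ∪ E') := fun m hm => by
  rw [mulIndicator_union_of_disjoint hd]
  exact mul_mem (h m hm) (h' m hm)

theorem liftGraph_congr (hE : ∀ m, 2 ∣ m - p → (m ∈ E ↔ m ∈ E'))
    (h : (g, f) ∈ liftGraph σ p E) : (g, f) ∈ liftGraph σ p E' := fun m hm => by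
  have hmE : E.mulIndicator (fun _ => f) m = E'.mulIndicator (fun _ => f) m := by
    by_cases h : m ∈ E' <;> simp [h, hE m hm]
  exact hmE ▸ h m hm

theorem two_dvd_add_unit (u : ℤˣ) (hm : 2 ∣ m - p) : 2 ∣ m + u - (1 - p) := by
  rcases Int.units_eq_one_or u with rfl | rfl <;> push_cast <;> omega

theorem two_dvd_sub_unit (u : ℤˣ) (hm : 2 ∣ m - p) : 2 ∣ m - u - (1 - p) := by
  simpa [sub_eq_add_neg] using two_dvd_add_unit (-u) hm

theorem commutatorElement_eq_one_of_mem_supportedIn {a b c : ℝ} (hf : f ∈ supportedIn a b)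
    (hf' : f' ∈ supportedIn b c) : ⁅f, f'⁆ = 1 :=
  commutatorElement_eq_one_iff_commute.2 <| commute_of_disjoint_support fun x =>
    (le_total b x).imp (fun h => mem_supportedIn.1 hf x (.inr h))
      (fun h => mem_supportedIn.1 hf' x (.inl h))

theorem units_ne_neg_self (u : ℤˣ) : u ≠ -u :=
  Int.units_ne_iff_eq_neg.2 (neg_neg u).symm

/-- The commutator of two lifts of opposite parities is a lift, provided it is one on the
right half of each cell, where the second factor acts by a copy of `f'`. -/
theorem liftGraph_commutator_of_right (h : (g, f) ∈ liftGraph σ p univ)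
    (h' : (g', f') ∈ liftGraph σ (1 - p) E) (hf : f ∈ supportedIn 0 (1 / 2)) (hf₀ : f' 0 = 0)
    {k : ℝ ≃o ℝ} (hk : k ∈ supportedIn 0 (1 / 2)) {J : Set ℤ}
    (hJ : ∀ m ∈ J, m + σ m ∈ E)
    (htransl : ∀ m, σ (m + σ m) = σ m → m + σ m ∈ E →
      ⁅f, translConj (1 / 2) f'⁆ = J.mulIndicator (fun _ => k) m)
    (hrefl : ∀ m, σ (m + σ m) = -σ m → m + σ m ∈ E →
      ⁅f, reflConj (1 / 2) f'⁆ = J.mulIndicator (fun _ => k) m) :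
    (⁅g, g'⁆, k) ∈ liftGraph σ p J := fun m hm => by
  have hright := h' _ (two_dvd_add_unit (σ m) hm)
  have hfix : E.mulIndicator (fun _ => f') (m + σ m) 0 = 0 := by
    by_cases hE : m + σ m ∈ E <;> simp [hE, hf₀]
  obtain ⟨l, hl⟩ : ∃ l, (g', l) ∈ chartGraph (cellChart σ m) (Icc (-(1 / 2)) 0) :=
    exists_chartGraph_left (by by_cases hE : m - σ m ∈ E <;> simp [hE, hf₀])
      (h' _ (two_dvd_sub_unit (σ m) hm))
  obtain ⟨r, hr, hc⟩ : ∃ r, (g', r) ∈ chartGraph (cellChart σ m) (Icc 0 (1 / 2)) ∧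
      ⁅f, r⁆ = J.mulIndicator (fun _ => k) m := by
    rcases units_eq_or_eq_neg (σ (m + σ m)) (σ m) with hσ | hσ
    · refine ⟨_, chartGraph_translConj hσ hfix hright, ?_⟩
      by_cases hE : m + σ m ∈ E
      · rw [mulIndicator_of_mem hE, htransl m hσ hE]
      · simp [hE, mt (hJ m) hE]
    · refine ⟨_, chartGraph_reflConj hσ hfix hright, ?_⟩
      by_cases hE : m + σ m ∈ E
      · rw [mulIndicator_of_mem hE, hrefl m hσ hE]
      · simp [hE, mt (hJ m) hE]
  rw [← hc]
  refine chartGraph_commutator hf (mem_liftGraph_univ.1 h m hm) hr hl ?_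
  rw [hc]
  by_cases hmJ : m ∈ J
  · rwa [mulIndicator_of_mem hmJ]
  · rw [mulIndicator_of_notMem hmJ]
    exact one_mem _

theorem liftGraph_commutator_translConj (h : (g, f) ∈ liftGraph σ p univ)
    (h' : (g', f') ∈ liftGraph σ (1 - p) E) (hf : f ∈ supportedIn 0 (1 / 2))
    (hf' : f' ∈ supportedIn (-(1 / 2)) 0) :
    (⁅g, g'⁆, ⁅f, translConj (1 / 2) f'⁆) ∈
      liftGraph σ p {m | m + σ m ∈ E ∧ σ (m + σ m) = σ m} := by
  have ht : translConj (1 / 2) f' ∈ supportedIn 0 (1 / 2) := by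
    simpa using translConj_mem_supportedIn (s := 1 / 2) hf'
  have hr : reflConj (1 / 2) f' ∈ supportedIn (1 / 2) (1 / 2 - -(1 / 2)) := by
    simpa using reflConj_mem_supportedIn (s := 1 / 2) hf'
  refine liftGraph_commutator_of_right h h' hf (apply_right_of_mem_supportedIn hf')
    (commutatorElement_mem hf ht) (fun m hm => hm.1) (fun m hσ hE => ?_) (fun m hσ _ => ?_)
  · rw [mulIndicator_of_mem (by exact ⟨hE, hσ⟩)]
  · rw [mulIndicator_of_notMem fun hm => units_ne_neg_self _ (hm.2.symm.trans hσ),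
      commutatorElement_eq_one_of_mem_supportedIn hf hr]

theorem liftGraph_commutator_reflConj (h : (g, f) ∈ liftGraph σ p univ)
    (h' : (g', f') ∈ liftGraph σ (1 - p) E) (hf : f ∈ supportedIn 0 (1 / 2))
    (hf' : f' ∈ supportedIn 0 (1 / 2)) :
    (⁅g, g'⁆, ⁅f, reflConj (1 / 2) f'⁆) ∈
      liftGraph σ p {m | m + σ m ∈ E ∧ σ (m + σ m) = -σ m} := by
  have ht : translConj (1 / 2) f' ∈ supportedIn (1 / 2) (1 / 2 + 1 / 2) := by
    simpa using translConj_mem_supportedIn (s := 1 / 2) hf'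
  have hr : reflConj (1 / 2) f' ∈ supportedIn 0 (1 / 2) := by
    simpa using reflConj_mem_supportedIn (s := 1 / 2) hf'
  refine liftGraph_commutator_of_right h h' hf (apply_left_of_mem_supportedIn hf')
    (commutatorElement_mem hf hr) (fun m hm => hm.1) (fun m hσ _ => ?_) (fun m hσ hE => ?_)
  · rw [mulIndicator_of_notMem fun hm => units_ne_neg_self _ (hσ.symm.trans hm.2),
      commutatorElement_eq_one_of_mem_supportedIn hf ht]
  · rw [mulIndicator_of_mem (by exact ⟨hE, hσ⟩)]

/-- The right half of a cell is seen as an end half in the neighbouring cell. -/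
theorem chartGraph_right_endDilation
    (h : (g, centerDilation) ∈ chartGraph (cellChart σ (m + σ m)) (Icc (-(1 / 2)) (1 / 2))) :
    (g, endDilation) ∈ chartGraph (cellChart σ m) (Icc 0 (1 / 2)) := by
  have hc : centerDilation 0 = 0 := by
    simpa [self_eq_neg] using centerDilation_neg 0
  rcases units_eq_or_eq_neg (σ (m + σ m)) (σ m) with hσ | hσ
  · refine chartGraph_of_eqOn (fun y hy => ?_) (chartGraph_translConj hσ hc h)
    rw [translConj_apply, endDilation_of_nonneg hy]
  · refine chartGraph_of_eqOn (fun y hy => ?_) (chartGraph_reflConj hσ hc h)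
    rw [reflConj_apply, endDilation_of_nonneg hy, ← neg_sub y, centerDilation_neg, sub_neg_eq_add,
      add_comm]

theorem liftGraph_endDilation (h : (g, centerDilation) ∈ liftGraph σ (1 - p) univ) :
    (g, endDilation) ∈ liftGraph σ p univ := by
  rw [mem_liftGraph_univ] at h ⊢
  intro m hm
  have hleft : (g, endDilation) ∈ chartGraph (cellChart (-σ) m) (Icc 0 (1 / 2)) := by
    refine chartGraph_right_endDilation ?_
    have := chartGraph_cellChart_neg (h _ (two_dvd_sub_unit (σ m) hm))
    rwa [reflConj_centerDilation, neg_neg] at this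
  have hright := chartGraph_right_endDilation (h _ (two_dvd_add_unit (σ m) hm))
  rw [← Icc_union_Icc_eq_Icc (b := 0) (by norm_num) (by norm_num)]
  refine chartGraph_union (chartGraph_of_eqOn (fun y hy => ?_)
    (by simpa only [neg_neg, neg_zero] using chartGraph_cellChart_neg hleft)) hright
  rw [reflConj_apply, zero_sub, zero_sub, endDilation_of_nonpos hy,
    endDilation_of_nonneg ⟨by linarith [hy.2], by linarith [hy.1]⟩,
    show -y - 1 / 2 = -(y + 1 / 2) by ring, centerDilation_neg]
  ring

end LiftGraph

section ContainsLifts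

/-- The homeomorphisms `f` whose lift to the cells with index in `E` and congruent to `p` modulo
`2` belongs to `N`. -/
def liftable (σ : ℤ → ℤˣ) (N : Subgroup (ℝ ≃o ℝ)) (p : ℤ) (E : Set ℤ) : Subgroup (ℝ ≃o ℝ) :=
  (N.prod ⊤ ⊓ liftGraph σ p E).map (MonoidHom.snd _ _)

/-- `N` contains the lifts of all elements of `innerGroup` to the cells with index in `E` and
congruent to `p` modulo `2`. -/
def ContainsLifts (σ : ℤ → ℤˣ) (N : Subgroup (ℝ ≃o ℝ)) (p : ℤ) (E : Set ℤ) : Prop :=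
  innerGroup ≤ liftable σ N p E

/-- A group `G` which contains the lifts to all cells of each parity, together with a normal
subgroup `N` of `G`, encoded as a subgroup of the ambient group. -/
structure LiftSetting (σ : ℤ → ℤˣ) (G N : Subgroup (ℝ ≃o ℝ)) : Prop where
  univ : ∀ p, ContainsLifts σ G p univ
  le : N ≤ G
  le_normalizer : G ≤ Subgroup.normalizer N

variable {σ : ℤ → ℤˣ} {G N N' : Subgroup (ℝ ≃o ℝ)} {p : ℤ} {E E' : Set ℤ} {f g : ℝ ≃o ℝ}

theorem mem_liftable : f ∈ liftable σ N p E ↔ ∃ g ∈ N, (g, f) ∈ liftGraph σ p E := by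
  simp [liftable, Subgroup.mem_prod]

namespace ContainsLifts

theorem exists_mem (h : ContainsLifts σ N p E) (hf : f ∈ innerGroup) :
    ∃ g ∈ N, (g, f) ∈ liftGraph σ p E :=
  mem_liftable.1 (h hf)

theorem neg (h : ContainsLifts σ N p E) : ContainsLifts (-σ) N p E := fun f hf => by
  obtain ⟨g, hg, hl⟩ := h.exists_mem (reflConj_zero_mem_innerGroup hf)
  exact mem_liftable.2 ⟨g, hg, by simpa only [reflConj_reflConj] using liftGraph_neg hl⟩

theorem of_neg (h : ContainsLifts (-σ) N p E) : ContainsLifts σ N p E := by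
  simpa using h.neg

theorem mono (h : ContainsLifts σ N p E) (hN : N ≤ N') : ContainsLifts σ N' p E := fun f hf => by
  obtain ⟨g, hg, hl⟩ := h.exists_mem hf
  exact mem_liftable.2 ⟨g, hN hg, hl⟩

theorem congr (h : ContainsLifts σ N p E) (hE : ∀ m, 2 ∣ m - p → (m ∈ E ↔ m ∈ E')) :
    ContainsLifts σ N p E' := fun f hf => by
  obtain ⟨g, hg, hl⟩ := h.exists_mem hf
  exact mem_liftable.2 ⟨g, hg, liftGraph_congr hE hl⟩

theorem disjoint_union (h : ContainsLifts σ N p E) (h' : ContainsLifts σ N p E')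
    (hd : Disjoint E E') : ContainsLifts σ N p (E ∪ E') := fun f hf => by
  obtain ⟨g, hg, hl⟩ := h.exists_mem hf
  obtain ⟨g', hg', hl'⟩ := h'.exists_mem hf
  exact mem_liftable.2 ⟨g * g', mul_mem hg hg', liftGraph_union hl hl' hd⟩

theorem compl (hG : ContainsLifts σ G p univ) (h : ContainsLifts σ G p E) :
    ContainsLifts σ G p Eᶜ := fun f hf => by
  obtain ⟨g, hg, hl⟩ := h.exists_mem hf
  obtain ⟨g', hg', hl'⟩ := hG.exists_mem hf
  exact mem_liftable.2 ⟨g' * g⁻¹, mul_mem hg' (inv_mem hg), liftGraph_compl hl' hl⟩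

end ContainsLifts

namespace LiftSetting

theorem self (c : LiftSetting σ G N) : LiftSetting σ G G :=
  ⟨c.univ, le_rfl, Subgroup.le_normalizer⟩

theorem neg (c : LiftSetting σ G N) : LiftSetting (-σ) G N :=
  ⟨fun p => (c.univ p).neg, c.le, c.le_normalizer⟩

theorem conj_mem (c : LiftSetting σ G N) (hg : g ∈ G) {n : ℝ ≃o ℝ} (hn : n ∈ N) :
    g * n * g⁻¹ ∈ N :=
  (Subgroup.mem_normalizer_iff.1 (c.le_normalizer hg) n).1 hn

theorem commutator_mem_right (c : LiftSetting σ G N) (hg : g ∈ G) {n : ℝ ≃o ℝ} (hn : n ∈ N) :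
    ⁅g, n⁆ ∈ N :=
  mul_mem (c.conj_mem hg hn) (inv_mem hn)

theorem commutator_mem_left (c : LiftSetting σ G N) (hg : g ∈ G) {n : ℝ ≃o ℝ} (hn : n ∈ N) :
    ⁅n, g⁆ ∈ N := by
  rw [← commutatorElement_inv]
  exact inv_mem (c.commutator_mem_right hg hn)

theorem mem_liftable_of_conj (c : LiftSetting σ G N) {γ : ℝ ≃o ℝ} (hγ : γ ∈ innerGroup)
    (h : γ * f * γ⁻¹ ∈ liftable σ N p E) : f ∈ liftable σ N p E := by
  obtain ⟨n, hn, hl⟩ := mem_liftable.1 h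
  obtain ⟨g, hg, hgl⟩ := (c.univ p).exists_mem (inv_mem hγ)
  refine mem_liftable.2 ⟨g * n * g⁻¹, c.conj_mem hg hn, ?_⟩
  convert liftGraph_conj hgl hl using 2
  group

/-- `innerGroup` is perfect, and its conjugation action compresses the supports of any two elements
into `[a, b]`. -/
theorem containsLifts_of_commutator (c : LiftSetting σ G N) {a b : ℝ} (ha : -(1 / 2) < a)
    (hab : a < b) (hb : b < 1 / 2)
    (h : ∀ f₁ ∈ innerGroup ⊓ supportedIn a b, ∀ f₂ ∈ innerGroup ⊓ supportedIn a b,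
      ⁅f₁, f₂⁆ ∈ liftable σ N p E) : ContainsLifts σ N p E := by
  refine innerGroup_le_commutator.trans (Subgroup.commutator_le.2 ?_)
  intro f₁ hf₁ f₂ hf₂
  obtain ⟨e₁, he₁, hs₁⟩ := hf₁.2
  obtain ⟨e₂, he₂, hs₂⟩ := hf₂.2
  set e := max 0 (max e₁ e₂)
  have he₁e : e₁ ≤ e := (le_max_left _ _).trans (le_max_right _ _)
  have he₂e : e₂ ≤ e := (le_max_right _ _).trans (le_max_right _ _)
  have he0 : 0 ≤ e := le_max_left _ _
  have he : e < 1 / 2 := max_lt (by norm_num) (max_lt he₁ he₂)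
  obtain ⟨γ, hγ, hγa, hγb⟩ := exists_mem_innerGroup_map_Icc (c := -e) (d := e) (by linarith)
    (by linarith) he ha hab hb
  have conj_mem {f e'} (hf : f ∈ innerGroup) (hs : f ∈ supportedIn (-e') e') (hle : e' ≤ e) :
      γ * f * γ⁻¹ ∈ innerGroup ⊓ supportedIn a b :=
    ⟨innerGroup.mul_mem (innerGroup.mul_mem hγ hf) (innerGroup.inv_mem hγ),
      supportedIn_mono hγa hγb (conj_mem_supportedIn (supportedIn_mono (neg_le_neg hle) hle hs) γ)⟩
  refine c.mem_liftable_of_conj hγ ?_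
  rw [conjugate_commutatorElement]
  exact h _ (conj_mem hf₁ hs₁ he₁e) _ (conj_mem hf₂ hs₂ he₂e)

theorem inter (c : LiftSetting σ G N) (h : ContainsLifts σ N p E) (h' : ContainsLifts σ G p E') :
    ContainsLifts σ N p (E ∩ E') := by
  refine innerGroup_le_commutator.trans (Subgroup.commutator_le.2 fun f hf f' hf' => ?_)
  obtain ⟨g, hg, hl⟩ := h.exists_mem hf
  obtain ⟨g', hg', hl'⟩ := h'.exists_mem hf'
  exact mem_liftable.2 ⟨⁅g, g'⁆, c.commutator_mem_left hg' hg, liftGraph_commutator hl hl'⟩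

theorem union (c : LiftSetting σ G N) (h : ContainsLifts σ N p E) (h' : ContainsLifts σ N p E') :
    ContainsLifts σ N p (E ∪ E') := by
  rw [← union_sdiff_self]
  exact h.disjoint_union (c.inter h' ((c.univ p).compl (h.mono c.le))) disjoint_sdiff_right

theorem next_same (c : LiftSetting σ G N) (h : ContainsLifts σ N (1 - p) E) :
    ContainsLifts σ N p {m | m + σ m ∈ E ∧ σ (m + σ m) = σ m} := by
  refine c.containsLifts_of_commutator (a := 1 / 8) (b := 3 / 8) (by norm_num) (by norm_num)
    (by norm_num) fun f₁ hf₁ f₂ hf₂ => ?_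
  have hs := translConj_mem_supportedIn (s := -(1 / 2)) hf₂.2
  obtain ⟨g, hg, hl⟩ := (c.univ p).exists_mem hf₁.1
  obtain ⟨g', hg', hl'⟩ := h.exists_mem (mem_innerGroup_of_mem_supportedIn
    (translConj_mem_compactGroup IsDyadic.one.half.neg hf₂.1.1) hs (by norm_num) (by norm_num))
  have := liftGraph_commutator_translConj hl hl'
    (supportedIn_mono (by norm_num) (by norm_num) hf₁.2)
    (supportedIn_mono (by norm_num) (by norm_num) hs)
  rw [translConj_translConj_neg] at this
  exact mem_liftable.2 ⟨_, c.commutator_mem_right hg hg', this⟩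

theorem next_opposite (c : LiftSetting σ G N) (h : ContainsLifts σ N (1 - p) E) :
    ContainsLifts σ N p {m | m + σ m ∈ E ∧ σ (m + σ m) = -σ m} := by
  refine c.containsLifts_of_commutator (a := 1 / 8) (b := 3 / 8) (by norm_num) (by norm_num)
    (by norm_num) fun f₁ hf₁ f₂ hf₂ => ?_
  have hs := reflConj_mem_supportedIn (s := 1 / 2) hf₂.2
  obtain ⟨g, hg, hl⟩ := (c.univ p).exists_mem hf₁.1
  obtain ⟨g', hg', hl'⟩ := h.exists_mem (mem_innerGroup_of_mem_supportedIn
    (reflConj_mem_compactGroup IsDyadic.one.half hf₂.1.1) hs (by norm_num) (by norm_num))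
  have := liftGraph_commutator_reflConj hl hl'
    (supportedIn_mono (by norm_num) (by norm_num) hf₁.2)
    (supportedIn_mono (by norm_num) (by norm_num) hs)
  rw [reflConj_reflConj] at this
  exact mem_liftable.2 ⟨_, c.commutator_mem_right hg hg', this⟩

theorem next (c : LiftSetting σ G N) (h : ContainsLifts σ N (1 - p) E) :
    ContainsLifts σ N p {m | m + σ m ∈ E} := by
  refine (c.union (c.next_same h) (c.next_opposite h)).congr fun m _ => ?_
  have := units_eq_or_eq_neg (σ (m + σ m)) (σ m)
  simp only [mem_union, mem_ofPred_eq]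
  tauto

theorem prev (c : LiftSetting σ G N) (h : ContainsLifts σ N (1 - p) E) :
    ContainsLifts σ N p {m | m - σ m ∈ E} :=
  (c.neg.next h.neg).of_neg.congr fun m _ => by simp [sub_eq_add_neg]

end LiftSetting

/-- The cells which see, at relative position `i` in their own orientation, a cell of the same
orientation. -/
def sameSign (σ : ℤ → ℤˣ) (i : ℤ) : Set ℤ := {m | σ (m + σ m * i) = σ m}

/-- The cells `m` and `m'`, each read in its own orientation, see the same pattern of relative
orientations up to distance `r`. -/
def SamePattern (σ : ℤ → ℤˣ) (r : ℕ) (m m' : ℤ) : Prop :=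
  ∀ i ∈ Finset.Icc (-r : ℤ) r, (m ∈ sameSign σ i ↔ m' ∈ sameSign σ i)

theorem mem_sameSign {i m : ℤ} : m ∈ sameSign σ i ↔ σ (m + σ m * i) = σ m :=
  .rfl

theorem sameSign_neg (i : ℤ) : sameSign (-σ) i = sameSign σ (-i) := by
  ext m
  simp [mem_sameSign]

theorem mem_sameSign_add_one (i m : ℤ) : m ∈ sameSign σ (i + 1) ↔
    (m + σ m ∈ sameSign σ i ∧ σ (m + σ m) = σ m) ∨
      (m + σ m ∈ (sameSign σ (-i))ᶜ ∧ σ (m + σ m) = -σ m) := by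
  have hpos : m + σ m * (i + 1) = m + σ m + σ m * i := by ring
  rcases units_eq_or_eq_neg (σ (m + σ m)) (σ m) with h | h
  · simp [mem_sameSign, h, hpos]
  · have := units_eq_or_eq_neg (σ (m + σ m + σ m * i)) (σ m)
    have := units_ne_neg_self (σ m)
    simp only [mem_sameSign, h, hpos, mem_compl_iff, Units.val_neg, neg_mul_neg]
    grind

namespace LiftSetting

theorem sameSign_add_one (c : LiftSetting σ G N) {i : ℤ}
    (h : ∀ p, ContainsLifts σ G p (sameSign σ i))
    (h' : ∀ p, ContainsLifts σ G p (sameSign σ (-i))) (p : ℤ) :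
    ContainsLifts σ G p (sameSign σ (i + 1)) :=
  (c.self.union (c.self.next_same (h _))
    (c.self.next_opposite ((c.univ _).compl (h' _)))).congr fun m _ =>
      (mem_sameSign_add_one i m).symm

theorem sameSign_natCast (c : LiftSetting σ G N) (n : ℕ) :
    (∀ p, ContainsLifts σ G p (sameSign σ n)) ∧ ∀ p, ContainsLifts σ G p (sameSign σ (-n)) := by
  induction n with
  | zero =>
    have : sameSign σ 0 = Set.univ := by simp [sameSign]
    simpa [this] using c.univ
  | succ n ih =>
    refine ⟨fun p => by simpa using c.sameSign_add_one ih.1 ih.2 p, fun p => ?_⟩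
    have := c.neg.sameSign_add_one (i := n) (fun p => by simpa [sameSign_neg] using (ih.2 p).neg)
      (fun p => by simpa [sameSign_neg] using (ih.1 p).neg) p
    simpa [sameSign_neg] using this.of_neg

theorem sameSign (c : LiftSetting σ G N) (i : ℤ) : ContainsLifts σ G p (sameSign σ i) := by
  obtain ⟨n, rfl | rfl⟩ := i.eq_nat_or_neg
  exacts [(c.sameSign_natCast n).1 p, (c.sameSign_natCast n).2 p]

theorem biInter {ι : Type*} (c : LiftSetting σ G N) (s : Finset ι) {E : ι → Set ℤ}
    (h : ∀ i ∈ s, ContainsLifts σ G p (E i)) : ContainsLifts σ G p (⋂ i ∈ s, E i) := by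
  classical
  induction s using Finset.induction_on with
  | empty => simpa using c.univ p
  | insert i s _ ih =>
    rw [Finset.set_biInter_insert]
    exact c.self.inter (h i (Finset.mem_insert_self i s))
      (ih fun j hj => h j (Finset.mem_insert_of_mem hj))

theorem samePattern (c : LiftSetting σ G N) (r : ℕ) (m₀ : ℤ) :
    ContainsLifts σ G p {m | SamePattern σ r m m₀} := by
  refine (c.biInter (Finset.Icc (-r : ℤ) r)
    (E := fun i => {m | m ∈ GRho.sameSign σ i ↔ m₀ ∈ GRho.sameSign σ i})
    fun i _ => ?_).congr fun m _ => by simp [SamePattern]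
  by_cases h : m₀ ∈ GRho.sameSign σ i
  · simpa [h] using c.sameSign i
  · simpa [h, compl_def] using (c.univ p).compl (c.sameSign i)

theorem grow_one (c : LiftSetting σ G N) {B : Set ℤ} (h : ∀ p, ContainsLifts σ N p B) (p : ℤ) :
    ContainsLifts σ N p {m | m ∈ B ∨ m + 1 ∈ B ∨ m - 1 ∈ B} := by
  refine (c.union (h p) (c.union (c.next (h _)) (c.prev (h _)))).congr fun m _ => ?_
  rcases Int.units_eq_one_or (σ m) with hm | hm <;> simp [hm, ← sub_eq_add_neg, or_comm]

theorem grow (c : LiftSetting σ G N) {B : Set ℤ} (h : ∀ p, ContainsLifts σ N p B) (n : ℕ) :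
    ∀ p, ContainsLifts σ N p {m | ∃ b ∈ B, |m - b| ≤ n} := by
  induction n with
  | zero => exact fun p => (h p).congr fun m _ => by simp [sub_eq_zero]
  | succ n ih =>
    refine fun p => (c.grow_one ih p).congr fun m _ => ⟨?_, ?_⟩
    · rintro (⟨b, hb, h⟩ | ⟨b, hb, h⟩ | ⟨b, hb, h⟩) <;> exact ⟨b, hb, by push_cast; grind⟩
    · rintro ⟨b, hb, h⟩
      push_cast at h
      rcases lt_trichotomy m b with h' | h' | h'
      exacts [.inr (.inl ⟨b, hb, by grind⟩), .inl ⟨b, hb, by grind⟩, .inr (.inr ⟨b, hb, by grind⟩)]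

end LiftSetting

end ContainsLifts

/-! ### Quasi-periodic sign sequences -/

section Recurrence

/-- Quasi-periodicity of the sequence of orientations underlying a labelling, expressed on blocks
centred at an index: every block recurs with bounded gaps, and the inverse of every block occurs,
both at centres of the same parity. -/
structure IsQuasiPeriodicSign (σ : ℤ → ℤˣ) : Prop where
  recurrent : ∀ (m : ℤ) (r : ℕ), ∃ L : ℕ, ∀ k : ℤ, ∃ j, |k - j| ≤ L ∧ 2 ∣ j - m ∧
    ∀ i, |i| ≤ (r : ℤ) → σ (j + i) = σ (m + i)
  reversed : ∀ (m : ℤ) (r : ℕ), ∃ j, 2 ∣ j - m ∧ ∀ i, |i| ≤ (r : ℤ) → σ (j + i) = -σ (m - i)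

/-- The symmetry `j ↦ t + e * j` of the index set is compatible with the orientation at `j`. -/
def PreservesSign (σ : ℤ → ℤˣ) (e : ℤˣ) (t j : ℤ) : Prop :=
  σ (t + e * j) = e * σ j

variable {σ : ℤ → ℤˣ}

theorem abs_unit_mul (u : ℤˣ) (i : ℤ) : |(u : ℤ) * i| = |i| := by
  rcases Int.units_eq_one_or u with rfl | rfl <;> simp

namespace IsQuasiPeriodicSign

/-- A periodic sequence would be antisymmetric about some index. -/
theorem not_periodic (q : IsQuasiPeriodicSign σ) {t : ℤ} (ht : t ≠ 0) :
    ¬Function.Periodic σ t := fun hp => by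
  obtain ⟨j, ⟨s, hs⟩, hr⟩ := q.reversed 0 t.natAbs
  have hr := hr (-s % t) (by
    rw [abs_of_nonneg (Int.emod_nonneg _ ht), Int.natCast_natAbs]
    exact (Int.emod_lt_abs _ ht).le)
  have hmod : -s % t = -s - (-s / t) * t := by linarith [Int.emod_add_mul_ediv (-s) t]
  have hj : j + -s % t = s - (-s / t) * t := by linarith
  have hneg : 0 - -s % t = s + (-s / t) * t := by linarith
  have hp' : Function.Periodic σ ((-s / t) * t) := by simpa using hp.int_mul (-s / t)
  rw [hj, hneg, hp'.sub_eq, hp'] at hr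
  exact units_ne_neg_self _ hr

theorem exists_radius_not_periodicOn (q : IsQuasiPeriodicSign σ) {t : ℤ} (ht : t ≠ 0) :
    ∃ R : ℕ, ∀ m, ¬∀ j, |j - m| ≤ (R : ℤ) → σ (j + t) = σ j := by
  by_contra! hc
  refine q.not_periodic ht fun j => ?_
  obtain ⟨L, hL⟩ := q.recurrent j t.natAbs
  obtain ⟨m, hm⟩ := hc L
  obtain ⟨j', hj', -, h⟩ := hL m
  rw [← h t (by simp), hm j' (by rwa [abs_sub_comm])]
  simpa using h 0 (by simp)

/-- For a fixed displacement bound only finitely many translations occur, and a reflection in an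
integer would fix its centre while reversing its orientation. -/
theorem exists_radius_symmetry_trivial (q : IsQuasiPeriodicSign σ) (d : ℕ) :
    ∃ R : ℕ, ∀ (m : ℤ) (e : ℤˣ) (t : ℤ), 2 ∣ t → |t + e * m - m| ≤ d →
      (∀ j, |j - m| ≤ (R : ℤ) → PreservesSign σ e t j) → e = 1 ∧ t = 0 := by
  have hR (t : ℤ) : ∃ R : ℕ, t ≠ 0 → ∀ m, ¬∀ j, |j - m| ≤ (R : ℤ) → σ (j + t) = σ j := by
    by_cases ht : t = 0
    · exact ⟨0, fun h => absurd ht h⟩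
    · exact (q.exists_radius_not_periodicOn ht).imp fun _ h _ => h
  choose R hR using hR
  refine ⟨d + (Finset.Icc (-d : ℤ) d).sup R, fun m e t ht hd hS => ?_⟩
  rcases Int.units_eq_one_or e with rfl | rfl
  · refine ⟨rfl, by_contra fun h0 => hR t h0 m fun j hj => ?_⟩
    have hle : R t ≤ (Finset.Icc (-d : ℤ) d).sup R :=
      Finset.le_sup (f := R) (Finset.mem_Icc.2 (abs_le.1 (by simpa using hd)))
    simpa [PreservesSign, add_comm t] using hS j (by push_cast; omega)
  · obtain ⟨s, rfl⟩ := ht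
    rw [Units.val_neg, Units.val_one] at hd
    have := hS s (by push_cast; grind)
    rw [PreservesSign, Units.val_neg, Units.val_one, show 2 * s + -1 * s = s by ring, neg_one_mul]
      at this
    exact absurd this (units_ne_neg_self _)

end IsQuasiPeriodicSign

theorem PreservesSign.cellChart_eq {e : ℤˣ} {t m : ℤ} (h : PreservesSign σ e t m) (y : ℝ) :
    cellChart σ (t + e * m) y = t / 2 + ((e : ℤ) : ℝ) * cellChart σ m y := by
  rw [cellChart, cellChart, h]
  push_cast
  ring

theorem SamePattern.symm {r : ℕ} {m m' : ℤ} (h : SamePattern σ r m m') : SamePattern σ r m' m :=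
  fun i hi => (h i hi).symm

theorem SamePattern.trans {r : ℕ} {m m' m'' : ℤ} (h : SamePattern σ r m m')
    (h' : SamePattern σ r m' m'') : SamePattern σ r m m'' :=
  fun i hi => (h i hi).trans (h' i hi)

theorem SamePattern.preservesSign {r : ℕ} {m m' j : ℤ} (h : SamePattern σ r m m')
    (hj : |j - m| ≤ r) :
    PreservesSign σ (σ m * σ m') (m' - ((σ m * σ m' : ℤˣ) : ℤ) * m) j := by
  have hi := h (σ m * (j - m)) (Finset.mem_Icc.2 (abs_le.1 (by rwa [abs_unit_mul])))
  have hm : m + σ m * (σ m * (j - m)) = j := by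
    rw [← mul_assoc, ← Units.val_mul, Int.units_mul_self]
    simp
  have hm' : m' + σ m' * (σ m * (j - m)) =
      m' - ((σ m * σ m' : ℤˣ) : ℤ) * m + ((σ m * σ m' : ℤˣ) : ℤ) * j := by
    push_cast
    ring
  simp only [mem_sameSign, hm, hm'] at hi
  rw [PreservesSign]
  rcases units_eq_or_eq_neg (σ j) (σ m) with hs | hs
  · rw [hi.1 hs, hs, mul_right_comm, Int.units_mul_self, one_mul]
  · rw [(units_eq_or_eq_neg _ _).resolve_left fun h' =>
        units_ne_neg_self _ ((hi.2 h').symm.trans hs), hs, mul_neg, mul_right_comm,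
      Int.units_mul_self, one_mul]

/-- The homeomorphisms of bounded displacement which act near each point according to the pattern of
orientations around it: they commute with each symmetry `x ↦ t / 2 + e * x` of the line wherever it
preserves the orientations in a neighbourhood of fixed radius. -/
def localGroup (σ : ℤ → ℤˣ) : Subgroup (ℝ ≃o ℝ) where
  carrier := {g | ∃ r d : ℕ, (∀ x, |g x - x| ≤ d) ∧ ∀ (e : ℤˣ) (t : ℤ) (x : ℝ), 2 ∣ t →
    (∀ j : ℤ, |(j : ℝ) - 2 * x| ≤ r → PreservesSign σ e t j) →
      g (t / 2 + ((e : ℤ) : ℝ) * x) = t / 2 + ((e : ℤ) : ℝ) * g x}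
  one_mem' := ⟨0, 0, by simp, by simp⟩
  mul_mem' := by
    rintro g g' ⟨r, d, hd, hg⟩ ⟨r', d', hd', hg'⟩
    refine ⟨r' + r + 2 * d', d + d', fun x => ?_, fun e t x ht hS => ?_⟩
    · rw [RelIso.mul_apply, Nat.cast_add]
      exact (abs_sub_le _ (g' x) _).trans (add_le_add (hd _) (hd' _))
    · have hx := abs_le.1 (hd' x)
      push_cast at hS
      rw [RelIso.mul_apply, RelIso.mul_apply, hg' e t x ht fun j hj =>
          hS j (by linarith [(r.cast_nonneg : (0 : ℝ) ≤ r)]),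
        hg e t _ ht fun j hj => hS j ?_]
      rw [abs_le] at hj ⊢
      constructor <;> linarith [(r'.cast_nonneg : (0 : ℝ) ≤ r')]
  inv_mem' := by
    rintro g ⟨r, d, hd, hg⟩
    have hd' (x : ℝ) : |(g⁻¹ : ℝ ≃o ℝ) x - x| ≤ d := by
      simpa only [RelIso.apply_inv_self, abs_sub_comm] using hd ((g⁻¹ : ℝ ≃o ℝ) x)
    refine ⟨r + 2 * d, d, hd', fun e t x ht hS => ?_⟩
    rw [inv_apply_eq, hg e t _ ht fun j hj => hS j ?_, RelIso.apply_inv_self]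
    have hx := abs_le.1 (hd' x)
    push_cast
    rw [abs_le] at hj ⊢
    constructor <;> linarith

theorem abs_cellChart_sub_le (m : ℤ) {y y' : ℝ} (hy : y ∈ Icc (-(1 / 2)) (1 / 2))
    (hy' : y' ∈ Icc (-(1 / 2)) (1 / 2)) : |cellChart σ m y - cellChart σ m y'| ≤ 1 := by
  obtain ⟨h₁, h₂⟩ := hy
  obtain ⟨h₁', h₂'⟩ := hy'
  rw [abs_le, cellChart, cellChart]
  rcases Int.units_eq_one_or (σ m) with h | h <;> rw [h] <;> push_cast <;>
    constructor <;> linarith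

theorem abs_sub_two_mul_cellChart_le (m : ℤ) {y : ℝ} (hy : y ∈ Icc (-(1 / 2)) (1 / 2)) :
    |m - 2 * cellChart σ m y| ≤ 1 := by
  obtain ⟨h₁, h₂⟩ := hy
  rw [abs_le, cellChart]
  rcases Int.units_eq_one_or (σ m) with h | h <;> rw [h] <;> push_cast <;>
    constructor <;> linarith

theorem mem_localGroup_of_mem_liftGraph {f g : ℝ ≃o ℝ} {p : ℤ}
    (h : (g, f) ∈ liftGraph σ p univ) (hf : f ∈ supportedIn (-(1 / 2)) (1 / 2)) :
    g ∈ localGroup σ := by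
  refine ⟨1, 1, fun x => ?_, fun e t x ht hS => ?_⟩ <;>
    obtain ⟨m, hm, y, hy, rfl⟩ := exists_cellChart_eq σ p x
  · rw [apply_cellChart_of_mem h hm (mem_univ m) hy, Nat.cast_one]
    exact abs_cellChart_sub_le m ((mem_Icc_iff_of_mem_supportedIn hf).2 hy) hy
  · have hs : PreservesSign σ e t m :=
      hS m (by simpa using abs_sub_two_mul_cellChart_le m hy)
    have hm' : 2 ∣ t + e * m - p := by
      rcases Int.units_eq_one_or e with rfl | rfl <;> simp <;> omega
    rw [← hs.cellChart_eq, apply_cellChart_of_mem h hm' (mem_univ _) hy, hs.cellChart_eq,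
      apply_cellChart_of_mem h hm (mem_univ m) hy]

end Recurrence

/-! ### Lifts contained in a normal subgroup -/

section NormalSubgroup

variable {σ : ℤ → ℤˣ} {G N : Subgroup (ℝ ≃o ℝ)} {p : ℤ} {E : Set ℤ} {f g F : ℝ ≃o ℝ} {a b : ℝ}

theorem exists_cellChart_eq_of_apply_ne (hf : f ∈ supportedIn a b)
    (h : (F, f) ∈ liftGraph σ p E) {x : ℝ} (hx : F x ≠ x) :
    ∃ m ∈ E, 2 ∣ m - p ∧ ∃ y ∈ Ioo a b, cellChart σ m y = x := by
  obtain ⟨m, hm, y, hy, rfl⟩ := exists_cellChart_eq σ p x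
  have hE : m ∈ E := by_contra fun hE => hx (apply_cellChart_of_notMem h hm hE hy)
  refine ⟨m, hE, hm, y, by_contra fun hab => hx ?_, rfl⟩
  rw [apply_cellChart_of_mem h hm hE hy, mem_supportedIn.1 hf]
  grind

theorem abs_sub_le_of_abs_cellChart_sub_le {m m' : ℤ} {y y' : ℝ} {d : ℕ}
    (hy : y ∈ Icc (-(1 / 2)) (1 / 2)) (hy' : y' ∈ Icc (-(1 / 2)) (1 / 2))
    (h : |cellChart σ m' y' - cellChart σ m y| ≤ d) : |m' - m| ≤ ((2 + 2 * d : ℕ) : ℤ) := by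
  have h₁ := abs_le.1 (abs_sub_two_mul_cellChart_le (σ := σ) m hy)
  have h₂ := abs_le.1 (abs_sub_two_mul_cellChart_le (σ := σ) m' hy')
  have h₃ := abs_le.1 h
  rify
  rw [abs_le]
  constructor <;> linarith

theorem two_dvd_sub_unit_mul {m m' : ℤ} (u : ℤˣ) (h : 2 ∣ m - m') : 2 ∣ m - u * m' := by
  rcases Int.units_eq_one_or u with rfl | rfl <;> simp <;> omega

/-- Cells of equal pattern are exchanged by symmetries commuting with `g`, and two such cells which
are close to each other coincide: hence what `g` does to one cell it does to all of them. -/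
theorem exists_radius_displaced (q : IsQuasiPeriodicSign σ) (hg : g ∈ localGroup σ) :
    ∃ r : ℕ, ∀ (m₀ : ℤ) (J : Set ℝ), J ⊆ Icc (-(1 / 2)) (1 / 2) →
      (∀ y ∈ J, ∀ y' ∈ J, g (cellChart σ m₀ y) ≠ cellChart σ m₀ y') →
      ∀ m m', 2 ∣ m - m₀ → 2 ∣ m' - m₀ → SamePattern σ r m m₀ → SamePattern σ r m' m₀ →
      ∀ y ∈ J, ∀ y' ∈ J, g (cellChart σ m y) ≠ cellChart σ m' y' := by
  obtain ⟨r, d, hd, hloc⟩ := hg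
  obtain ⟨R, hR⟩ := q.exists_radius_symmetry_trivial (2 + 2 * d)
  refine ⟨R + r + 1, fun m₀ J hJ hne m m' hm hm' hS hS' y hy y' hy' heq => ?_⟩
  obtain rfl : m' = m := by
    have hclose := abs_sub_le_of_abs_cellChart_sub_le (hJ hy) (hJ hy') (heq ▸ hd (cellChart σ m y))
    obtain ⟨he, ht⟩ := hR m _ _ (two_dvd_sub_unit_mul (m := m') (m' := m) (σ m * σ m') (by omega))
      (by simpa using hclose)
      fun j hj => (hS.trans hS'.symm).preservesSign (by push_cast; omega)
    rw [he] at ht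
    simpa [sub_eq_zero] using ht
  have hsymm {j : ℤ} (hj : |j - m₀| ≤ (R + r + 1 : ℕ)) := hS.symm.preservesSign hj
  have hchart (z : ℝ) := (hsymm (j := m₀) (by
    simp only [sub_self, abs_zero, Nat.cast_add, Nat.cast_one]
    positivity)).cellChart_eq z
  have hcell : m' - ((σ m₀ * σ m' : ℤˣ) : ℤ) * m₀ + ((σ m₀ * σ m' : ℤˣ) : ℤ) * m₀ = m' := by ring
  have hmove := hloc _ _ (cellChart σ m₀ y) (two_dvd_sub_unit_mul (σ m₀ * σ m') hm) fun j hj =>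
    hsymm (by
      have := abs_le.1 hj
      have := abs_le.1 (abs_sub_two_mul_cellChart_le (σ := σ) m₀ (hJ hy))
      rify
      rw [abs_le]
      constructor <;> linarith [(R.cast_nonneg : (0 : ℝ) ≤ R)])
  rw [← hchart, hcell, heq] at hmove
  nth_rw 1 [← hcell] at hmove
  rw [hchart, add_right_inj, mul_right_inj' (by simp)] at hmove
  exact hne y hy y' hy' hmove.symm

/-- The cell whose centre is closest to a moved point contains that point well inside. -/
theorem exists_displaced_Ioo (σ : ℤ → ℤˣ) (hg : g ≠ 1) :
    ∃ (m₀ : ℤ) (a b : ℝ), -(1 / 2) < a ∧ a < b ∧ b < 1 / 2 ∧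
      ∀ y ∈ Ioo a b, ∀ y' ∈ Ioo a b, g (cellChart σ m₀ y) ≠ cellChart σ m₀ y' := by
  obtain ⟨x₀, hx₀⟩ : ∃ x, g x ≠ x := by
    by_contra! h
    exact hg (RelIso.ext h)
  set m₀ := round (2 * x₀)
  have hround := abs_le.1 (abs_sub_round (2 * x₀))
  obtain ⟨y₀, hy₀, hy₀x⟩ : ∃ y₀ ∈ Ioo (-(3 / 8) : ℝ) (3 / 8), cellChart σ m₀ y₀ = x₀ := by
    rcases Int.units_eq_one_or (σ m₀) with h | h
    · refine ⟨x₀ - m₀ / 2, ⟨?_, ?_⟩, by rw [cellChart, h]; simp⟩ <;> linarith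
    · refine ⟨m₀ / 2 - x₀, ⟨?_, ?_⟩, by rw [cellChart, h]; simp⟩ <;> linarith
  have hcont : Continuous (cellChart σ m₀) := by
    unfold cellChart
    fun_prop
  have hnear : ∀ᶠ z in 𝓝 y₀ ×ˢ 𝓝 y₀, g (cellChart σ m₀ z.1) ≠ cellChart σ m₀ z.2 := by
    rw [← nhds_prod_eq]
    refine IsOpen.mem_nhds (isOpen_ne_fun ?_ ?_) (by simpa [hy₀x] using hx₀)
    · exact g.continuous.comp (hcont.comp continuous_fst)
    · exact hcont.comp continuous_snd
  obtain ⟨t, ht, hne⟩ := eventually_prod_self_iff'.1 hnear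
  obtain ⟨a, b, hab, hsub⟩ := mem_nhds_iff_exists_Ioo_subset.1
    (inter_mem ht (Ioo_mem_nhds hy₀.1 hy₀.2))
  obtain ⟨ha, hb⟩ := (Ioo_subset_Ioo_iff (hab.1.trans hab.2)).1 (hsub.trans inter_subset_right)
  exact ⟨m₀, a, b, by linarith, hab.1.trans hab.2, by linarith,
    fun y hy y' hy' => hne y (hsub hy).1 y' (hsub hy').1⟩

namespace LiftSetting

theorem commutator_mem_of_commute (c : LiftSetting σ G N) (hg : g ∈ N) {F₁ F₂ : ℝ ≃o ℝ}
    (h₁ : F₁ ∈ G) (h₂ : F₂ ∈ G) (h : Commute (g * F₁ * g⁻¹) F₂) : ⁅F₁, F₂⁆ ∈ N := by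
  have heq : ⁅⁅F₁, g⁆, F₂⁆ = ⁅F₁, F₂⁆ := by
    have hA : ⁅F₁, g⁆ = F₁ * (g * F₁ * g⁻¹)⁻¹ := by group
    rw [hA, commutatorElement_def, commutatorElement_def, mul_assoc F₁ _ F₂, h.inv_left.eq]
    group
  exact heq ▸ c.commutator_mem_left h₂ (c.commutator_mem_right h₁ hg)

theorem exists_containsLifts_samePattern (c : LiftSetting σ G N) (q : IsQuasiPeriodicSign σ)
    (hN : N ≤ localGroup σ) (hN1 : N ≠ ⊥) :
    ∃ (m₀ : ℤ) (r : ℕ), ContainsLifts σ N m₀ {m | SamePattern σ r m m₀} := by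
  obtain ⟨g, hg, hg1⟩ := N.bot_or_exists_ne_one.resolve_left hN1
  obtain ⟨m₀, a, b, ha, hab, hb, hdisp⟩ := exists_displaced_Ioo σ hg1
  obtain ⟨r, hr⟩ := exists_radius_displaced q (hN hg)
  have hr := hr m₀ (Ioo a b) (fun y hy => ⟨by linarith [hy.1], by linarith [hy.2]⟩) hdisp
  refine ⟨m₀, r, c.containsLifts_of_commutator ha hab hb fun f₁ hf₁ f₂ hf₂ => ?_⟩
  obtain ⟨F₁, hF₁, hl₁⟩ := (c.samePattern (p := m₀) r m₀).exists_mem hf₁.1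
  obtain ⟨F₂, hF₂, hl₂⟩ := (c.samePattern (p := m₀) r m₀).exists_mem hf₂.1
  have hcomm : Commute (g * F₁ * g⁻¹) F₂ := commute_of_disjoint_support fun x => by
    by_contra! ⟨hx₁, hx₂⟩
    have hx₁ : F₁ ((g⁻¹ : ℝ ≃o ℝ) x) ≠ (g⁻¹ : ℝ ≃o ℝ) x := fun h => hx₁ (by
      simp [RelIso.mul_apply, h])
    obtain ⟨m, hm, hmp, y, hy, hyx⟩ := exists_cellChart_eq_of_apply_ne hf₁.2 hl₁ hx₁
    obtain ⟨m', hm', hmp', y', hy', hyx'⟩ := exists_cellChart_eq_of_apply_ne hf₂.2 hl₂ hx₂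
    exact hr m m' hmp hmp' hm hm' y hy y' hy' (by rw [hyx, hyx', RelIso.apply_inv_self])
  refine mem_liftable.2 ⟨⁅F₁, F₂⁆, c.commutator_mem_of_commute hg hF₁ hF₂ hcomm, ?_⟩
  simpa using liftGraph_commutator hl₁ hl₂

theorem containsLifts_univ (c : LiftSetting σ G N) (q : IsQuasiPeriodicSign σ)
    (hN : N ≤ localGroup σ) (hN1 : N ≠ ⊥) (p : ℤ) : ContainsLifts σ N p Set.univ := by
  obtain ⟨m₀, r, hm₀⟩ := c.exists_containsLifts_samePattern q hN hN1
  obtain ⟨L, hL⟩ := q.recurrent m₀ r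
  have hB (p : ℤ) : ContainsLifts σ N p {m | SamePattern σ r m m₀ ∧ 2 ∣ m - m₀} := by
    by_cases hp : 2 ∣ p - m₀
    · intro f hf
      obtain ⟨F, hF, hl⟩ := (hm₀.congr fun m hm => (and_iff_left hm).symm).exists_mem hf
      exact mem_liftable.2 ⟨F, hF, fun m hm => hl m (by omega)⟩
    · refine fun f _ => mem_liftable.2 ⟨1, one_mem _, mem_liftGraph.2 fun m hm => ?_⟩
      rw [mulIndicator_of_notMem fun h => hp (by have := h.2; omega)]
      exact one_mem _
  refine (c.grow hB L p).congr fun m _ => iff_of_true ?_ (mem_univ m)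
  obtain ⟨j, hj, hjp, hs⟩ := hL m
  refine ⟨j, ⟨fun i hi => ?_, hjp⟩, hj⟩
  have h0 : σ j = σ m₀ := by simpa using hs 0 (by simp)
  rw [mem_sameSign, mem_sameSign, h0,
    hs _ (by rw [abs_unit_mul]; exact abs_le.2 (Finset.mem_Icc.1 hi))]

end LiftSetting

end NormalSubgroup

end GRho

/-! ### Labellings and the group `G_ρ` -/

/-- The exponent of a letter. -/
def Letter.sign : Letter → ℤˣ
  | .a | .b => 1
  | .A | .B => -1

theorem Letter.sign_inv (l : Letter) : l.inv.sign = -l.sign := by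
  cases l <;> rfl

theorem IsLabelling.two_dvd_sub {ρ : ℤ → Letter} (h : IsLabelling ρ) {m m' : ℤ}
    (heq : ρ m' = ρ m ∨ ρ m' = (ρ m).inv) : 2 ∣ m' - m := by
  rcases Int.even_or_odd m with hm | hm <;> rcases Int.even_or_odd m' with hm' | hm'
  · exact (hm'.sub hm).two_dvd
  · rcases (h m).1 hm with h₁ | h₁ <;> rcases (h m').2 hm' with h₂ | h₂ <;>
      simp [h₁, h₂, Letter.inv] at heq
  · rcases (h m).2 hm with h₁ | h₁ <;> rcases (h m').1 hm' with h₂ | h₂ <;>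
      simp [h₁, h₂, Letter.inv] at heq
  · exact (hm'.sub_odd hm).two_dvd

namespace GRho

open Set

section BlockWord

variable {ρ : ℤ → Letter} {k k' : ℤ} {n n' i : ℕ}

theorem length_blockWord : (blockWord ρ k n).length = n + 1 := by
  simp [blockWord]

theorem getElem?_blockWord (hi : i ≤ n) : (blockWord ρ k n)[i]? = some (ρ (k + i)) := by
  have hcast : (List.range (n + 1)).flatMap (fun a : ℕ => [(a : ℤ)]) =
      (List.range (n + 1)).map fun a : ℕ => (a : ℤ) :=
    List.flatMap_pure_eq_map _ _
  simp [blockWord, hcast, List.getElem?_range (Nat.lt_succ_of_le hi)]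

theorem exists_offset_of_blockWord_isInfix (h : blockWord ρ k n <:+: blockWord ρ k' n') :
    ∃ j : ℕ, j + n ≤ n' ∧ ∀ i : ℕ, i ≤ n → ρ (k' + j + i) = ρ (k + i) := by
  obtain ⟨s, t, h⟩ := h
  have hlen := congrArg List.length h
  simp only [List.length_append, length_blockWord] at hlen
  refine ⟨s.length, by omega, fun i hi => ?_⟩
  have hget := getElem?_blockWord (ρ := ρ) (k := k') (n := n') (i := s.length + i) (by omega)
  rw [← h, List.append_assoc, List.getElem?_append_right (by omega), Nat.add_sub_cancel_left,
    List.getElem?_append_left (by rw [length_blockWord]; omega), getElem?_blockWord hi] at hget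
  rw [Option.some.inj hget, add_assoc, Nat.cast_add]

theorem apply_eq_inv_of_blockWord_eq_wordInv (h : blockWord ρ k' n = wordInv (blockWord ρ k n))
    (hi : i ≤ n) : ρ (k' + i) = (ρ (k + n - i)).inv := by
  have hget := getElem?_blockWord (ρ := ρ) (k := k') hi
  rw [h, wordInv, List.getElem?_reverse (by rw [List.length_map, length_blockWord]; omega),
    List.length_map, length_blockWord, List.getElem?_map, show n + 1 - 1 - i = n - i by omega,
    getElem?_blockWord (Nat.sub_le n i)] at hget
  rw [← Option.some.inj hget, Nat.cast_sub hi, add_sub_assoc]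

end BlockWord

section IsQuasiPeriodic

variable {ρ : ℤ → Letter}

theorem exists_centred_block_recurrence (h : IsQuasiPeriodic ρ) (m : ℤ) (r : ℕ) :
    ∃ L : ℕ, ∀ k : ℤ, ∃ j, |k - j| ≤ L ∧ ∀ i, |i| ≤ (r : ℤ) → ρ (j + i) = ρ (m + i) := by
  obtain ⟨L, hL⟩ := h.2.1 (m - r) (2 * r)
  refine ⟨L, fun k => ?_⟩
  obtain ⟨j, hj, heq⟩ := exists_offset_of_blockWord_isInfix (hL k L (by omega))
  refine ⟨k + j + r, by grind, fun i hi => ?_⟩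
  obtain ⟨l, hl⟩ := Int.eq_ofNat_of_zero_le (a := i + r) (by grind)
  have := heq l (by grind)
  rwa [← hl, show k + j + (i + r) = k + j + r + i by ring, show m - r + (i + r) = m + i by ring]
    at this

theorem exists_centred_block_inverse (h : IsQuasiPeriodic ρ) (m : ℤ) (r : ℕ) :
    ∃ j, ∀ i, |i| ≤ (r : ℤ) → ρ (j + i) = (ρ (m - i)).inv := by
  obtain ⟨k, hk⟩ := h.2.2 (m - r) (2 * r)
  refine ⟨k + r, fun i hi => ?_⟩
  obtain ⟨l, hl⟩ := Int.eq_ofNat_of_zero_le (a := i + r) (by grind)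
  have := apply_eq_inv_of_blockWord_eq_wordInv hk (i := l) (by grind)
  rwa [← hl, show k + (i + r) = k + r + i by ring,
    show m - r + (2 * r : ℕ) - (i + r) = m - i by push_cast; ring] at this

theorem isQuasiPeriodicSign_of_isQuasiPeriodic (h : IsQuasiPeriodic ρ) :
    IsQuasiPeriodicSign fun m => (ρ m).sign where
  recurrent m r := by
    obtain ⟨L, hL⟩ := exists_centred_block_recurrence h m r
    refine ⟨L, fun k => (hL k).imp fun j hj => ⟨hj.1, ?_, fun i hi => ?_⟩⟩
    · exact h.1.two_dvd_sub (.inl (by simpa using hj.2 0 (by simp)))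
    · rw [hj.2 i hi]
  reversed m r := by
    obtain ⟨j, hj⟩ := exists_centred_block_inverse h m r
    refine ⟨j, h.1.two_dvd_sub (.inr (by simpa using hj 0 (by simp))), fun i hi => ?_⟩
    rw [hj i hi, Letter.sign_inv]

theorem liftGraph_of_isZeta (h : IsLabelling ρ) {ν ζ : ℝ ≃o ℝ} (hζ : IsZeta ρ ν ζ)
    (hν : translConj (-(1 / 2)) ν ∈ supportedIn (-(1 / 2)) (1 / 2)) :
    (ζ, translConj (-(1 / 2)) ν) ∈ liftGraph (fun m => (ρ m).sign) 1 univ := by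
  refine mem_liftGraph_univ.2 fun m hm => mem_chartGraph.2
    ⟨fun y => mem_Icc_iff_of_mem_supportedIn hν, fun y hy => ?_⟩
  obtain ⟨hy₁, hy₂⟩ := hy
  obtain ⟨n, rfl⟩ : ∃ n, m = 2 * n + 1 := ⟨m / 2, by omega⟩
  rcases (h (2 * n + 1)).2 ⟨n, rfl⟩ with hr | hr <;>
    simp only [cellChart, translConj_apply, hr, Letter.sign, Units.val_one, Units.val_neg,
      Int.cast_one, Int.cast_neg]
  · rw [(hζ n _ ⟨by push_cast; linarith, by push_cast; linarith⟩).1 hr]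
    push_cast
    ring_nf
  · rw [(hζ n _ ⟨by push_cast; linarith, by push_cast; linarith⟩).2 hr]
    push_cast
    ring_nf

theorem liftGraph_of_isChi (h : IsLabelling ρ) {ν χ : ℝ ≃o ℝ} (hχ : IsChi ρ ν χ)
    (hν : translConj (-(1 / 2)) ν ∈ supportedIn (-(1 / 2)) (1 / 2)) :
    (χ, translConj (-(1 / 2)) ν) ∈ liftGraph (fun m => (ρ m).sign) 0 univ := by
  refine mem_liftGraph_univ.2 fun m hm => mem_chartGraph.2
    ⟨fun y => mem_Icc_iff_of_mem_supportedIn hν, fun y hy => ?_⟩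
  obtain ⟨hy₁, hy₂⟩ := hy
  obtain ⟨n, rfl⟩ : ∃ n, m = 2 * n := ⟨m / 2, by omega⟩
  rcases (h (2 * n)).1 ⟨n, by ring⟩ with hr | hr <;>
    simp only [cellChart, translConj_apply, hr, Letter.sign, Units.val_one, Units.val_neg,
      Int.cast_one, Int.cast_neg]
  · rw [(hχ n _ ⟨by push_cast; linarith, by push_cast; linarith⟩).1 hr]
    push_cast
    ring_nf
  · rw [(hχ n _ ⟨by push_cast; linarith, by push_cast; linarith⟩).2 hr]
    push_cast
    ring_nf

end IsQuasiPeriodic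

variable {σ : ℤ → ℤˣ} {G N : Subgroup (ℝ ≃o ℝ)} {p p' : ℤ} {f g ν : ℝ ≃o ℝ}

theorem liftGraph_congr_parity (hp : 2 ∣ p' - p) (h : (g, f) ∈ liftGraph σ p univ) :
    (g, f) ∈ liftGraph σ p' univ :=
  mem_liftGraph_univ.2 fun m hm => mem_liftGraph_univ.1 h m (by omega)

theorem one_centerDilation_notMem_liftGraph : (1, centerDilation) ∉ liftGraph σ p univ := by
  intro h
  refine centerDilation_ne_one (OrderIso.ext (funext fun y => ?_))
  by_cases hy : y ∈ Icc (-(1 / 2) : ℝ) (1 / 2)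
  · have hy := apply_cellChart_of_mem h (m := p) (by simp) (mem_univ p) hy
    rcases Int.units_eq_one_or (σ p) with hσ | hσ <;>
      simpa [cellChart, hσ, eq_comm] using hy
  · refine mem_supportedIn.1 (innerGroup_le_supportedIn centerDilation_mem_innerGroup) y ?_
    rcases le_total y (-(1 / 2)) with h | h
    exacts [.inl h, .inr (le_of_not_ge fun h' => hy ⟨h, h'⟩)]

theorem translConj_mem_liftable_of_inH (h : ∀ p, ContainsLifts σ N p univ) (hν : InH ν) (p : ℤ) :
    translConj (-(1 / 2)) ν ∈ liftable σ N p univ := by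
  obtain ⟨k, hk⟩ := exists_hasEndSlope_of_inH hν
  obtain ⟨hcompact, hsupp⟩ := Subgroup.mem_inf.1 (translConj_mem_of_inH hν)
  obtain ⟨hdcompact, hdsupp⟩ := Subgroup.mem_inf.1 endDilation_mem
  have hend : endDilation ∈ liftable σ N p univ := by
    obtain ⟨g, hg, hl⟩ := (h (1 - p)).exists_mem centerDilation_mem_innerGroup
    exact mem_liftable.2 ⟨g, hg, liftGraph_endDilation hl⟩
  have hinner : translConj (-(1 / 2)) ν * endDilation ^ (-k) ∈ innerGroup := by
    have hslope := hk.mul (hasEndSlope_endDilation.zpow (-k))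
    rw [add_neg_cancel] at hslope
    exact hslope.mem_innerGroup (mul_mem hcompact (zpow_mem hdcompact _))
      (mul_mem hsupp (zpow_mem hdsupp _))
  simpa using mul_mem (h p hinner) (zpow_mem hend k)

theorem containsLifts_of_closure {V : Set (ℝ ≃o ℝ)} (hV : ∀ f, InH f → f ∈ Subgroup.closure V)
    (h : ∀ ν ∈ V, translConj (-(1 / 2)) ν ∈ liftable σ G p univ) : ContainsLifts σ G p univ := by
  have hle : Subgroup.closure V ≤ (liftable σ G p univ).comap (translConj (-(1 / 2))) :=
    (Subgroup.closure_le _).2 h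
  intro f hf
  simpa only [Subgroup.mem_comap, translConj_neg_translConj] using
    hle (hV _ (inH_translConj_of_mem_innerGroup hf))

theorem LiftSetting.map_subtype (h : ∀ p, ContainsLifts σ G p Set.univ)
    (M : Subgroup G) [M.Normal] :
    LiftSetting σ G (M.map G.subtype) where
  univ := h
  le := Subgroup.map_subtype_le M
  le_normalizer := by
    simpa [Subgroup.normalizer_eq_top, ← MonoidHom.range_eq_map] using
      Subgroup.le_normalizer_map (H := M) G.subtype

theorem isSimpleGroup_of_closure_lifts (q : IsQuasiPeriodicSign σ) {S : Set (ℝ ≃o ℝ)}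
    (h : ∀ p, ContainsLifts σ (Subgroup.closure S) p univ)
    (hS : ∀ g ∈ S, ∃ p ν, InH ν ∧ (g, translConj (-(1 / 2)) ν) ∈ liftGraph σ p univ) :
    IsSimpleGroup (Subgroup.closure S) := by
  have hlocal : Subgroup.closure S ≤ localGroup σ := by
    refine (Subgroup.closure_le _).2 fun g hg => ?_
    obtain ⟨p, ν, hν, hl⟩ := hS g hg
    exact mem_localGroup_of_mem_liftGraph hl (translConj_mem_of_inH hν).2
  obtain ⟨g, hg, hl⟩ := (h 0).exists_mem centerDilation_mem_innerGroup
  have hg₁ : g ≠ 1 := by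
    rintro rfl
    exact one_centerDilation_notMem_liftGraph hl
  have : Nontrivial (Subgroup.closure S) := ⟨⟨g, hg⟩, 1, fun h => hg₁ (Subtype.ext_iff.1 h)⟩
  refine ⟨fun M hM => or_iff_not_imp_left.2 fun hbot => ?_⟩
  have c := LiftSetting.map_subtype h M
  have hN := c.containsLifts_univ q (c.le.trans hlocal)
    (mt (Subgroup.map_eq_bot_iff_of_injective M (Subgroup.subtype_injective _)).1 hbot)
  have hle : Subgroup.closure S ≤ M.map (Subgroup.closure S).subtype := by
    refine (Subgroup.closure_le _).2 fun g hg => ?_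
    obtain ⟨p, ν, hν, hl⟩ := hS g hg
    obtain ⟨g', hg', hl'⟩ := mem_liftable.1 (translConj_mem_liftable_of_inH hN hν p)
    rwa [SetLike.mem_coe, eq_of_mem_liftGraph hl hl']
  refine eq_top_iff.2 fun x _ => ?_
  obtain ⟨y, hy, hyx⟩ := hle x.2
  rwa [← Subtype.ext hyx]

end GRho

open GRho in
theorem G_rho_simple_general {ι : Type*} {ρ : ℤ → Letter} (hρ : IsQuasiPeriodic ρ)
    (ν ζ χ : ι → ℝ ≃o ℝ) (hν : ∀ f, f ∈ Subgroup.closure (Set.range ν) ↔ InH f)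
    (hζ : ∀ i, IsZeta ρ (ν i) (ζ i)) (hχ : ∀ i, IsChi ρ (ν i) (χ i)) :
    IsSimpleGroup (Subgroup.closure (Set.range ζ ∪ Set.range χ)) := by
  have hνH i : InH (ν i) := (hν _).1 (Subgroup.subset_closure ⟨i, rfl⟩)
  have hsupp i := (translConj_mem_of_inH (hνH i)).2
  have hζl i := liftGraph_of_isZeta hρ.1 (hζ i) (hsupp i)
  have hχl i := liftGraph_of_isChi hρ.1 (hχ i) (hsupp i)
  refine isSimpleGroup_of_closure_lifts (isQuasiPeriodicSign_of_isQuasiPeriodic hρ) (fun p => ?_) ?_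
  · refine containsLifts_of_closure (fun f => (hν f).2) (Set.forall_mem_range.2 fun i => ?_)
    rcases Int.emod_two_eq_zero_or_one p with hp | hp
    · exact mem_liftable.2 ⟨χ i, Subgroup.subset_closure (.inr ⟨i, rfl⟩),
        liftGraph_congr_parity (by omega) (hχl i)⟩
    · exact mem_liftable.2 ⟨ζ i, Subgroup.subset_closure (.inl ⟨i, rfl⟩),
        liftGraph_congr_parity (by omega) (hζl i)⟩
  · rintro _ (⟨i, rfl⟩ | ⟨i, rfl⟩)
    exacts [⟨1, ν i, hνH i, hζl i⟩, ⟨0, ν i, hνH i, hχl i⟩]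

/-- For a quasi-periodic labelling `ρ`, the group `G_ρ` is simple. -/
theorem G_rho_simple
    (ρ : ℤ → Letter) (hρ : IsQuasiPeriodic ρ)
    (H : Subgroup (ℝ ≃o ℝ)) (hH : ∀ f : ℝ ≃o ℝ, f ∈ H ↔ InH f)
    (ν₁ ν₂ ν₃ : ℝ ≃o ℝ) (hgen : Subgroup.closure {ν₁, ν₂, ν₃} = H)
    (ζ₁ ζ₂ ζ₃ χ₁ χ₂ χ₃ : ℝ ≃o ℝ)
    (hζ₁ : IsZeta ρ ν₁ ζ₁) (hζ₂ : IsZeta ρ ν₂ ζ₂) (hζ₃ : IsZeta ρ ν₃ ζ₃)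
    (hχ₁ : IsChi ρ ν₁ χ₁) (hχ₂ : IsChi ρ ν₂ χ₂) (hχ₃ : IsChi ρ ν₃ χ₃)
    (G : Subgroup (ℝ ≃o ℝ))
    (hG : G = Subgroup.closure {ζ₁, ζ₂, ζ₃, χ₁, χ₂, χ₃})
    : IsSimpleGroup ↥G := by
  have hrange (a b c : ℝ ≃o ℝ) : Set.range ![a, b, c] = {a, b, c} := by
    simp only [Matrix.range_cons, Matrix.range_empty, Set.union_empty, Set.insert_eq]
  have hsimple := G_rho_simple_general hρ ![ν₁, ν₂, ν₃] ![ζ₁, ζ₂, ζ₃] ![χ₁, χ₂, χ₃]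
    (by rwa [hrange, hgen]) (by simp [Fin.forall_fin_succ, *]) (by simp [Fin.forall_fin_succ, *])
  rw [hrange, hrange, Set.insert_union, Set.insert_union, Set.singleton_union] at hsimple
  rwa [hG]
end

section
/- Let ρ be a quasi-periodic labelling. Then the action of G_ρ on ℝ is minimal: for every x ∈ ℝ the orbit {g(x) : g ∈ G_ρ} is dense in ℝ. -/
open MulAction Set
open scoped Pointwise Topology

/-! The closure of an orbit is closed, so on a connected space it suffices that it be a
neighbourhood of the point whose orbit it is. Every real lies in the interior of an interval
`[n, n + 1]` or `[n - ½, n + ½]`, on which `G_ρ` induces an isometric copy of the action of `H` on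
`[0, 1]`; so it suffices that all `H`-orbits in `(0, 1)` are dense there. Now `H` contains copies of
the standard generator `x₀` of `F` supported on any `[p, r] ⊆ (0, 1)` with dyadic endpoints. Such a
copy fixes `p` and `r` and moves all points in between down, so a closed set that is invariant under
it and its inverse and meets `(p, r)` contains `p` and `r`. Hence the closure of an `H`-orbit in
`(0, 1)` contains all dyadics in `(0, 1)`. -/

section Dynamics

instance instContinuousConstSMulSubgroupOrderIso {α : Type*} [PartialOrder α]
    [TopologicalSpace α] [OrderTopology α] (L : Subgroup (α ≃o α)) : ContinuousConstSMul L α :=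
  ⟨fun f => f.1.continuous⟩

theorem isMinimal_of_closure_orbit_mem_nhds {M X : Type*} [Monoid M] [MulAction M X]
    [TopologicalSpace X] [PreconnectedSpace X] [ContinuousConstSMul M X]
    (h : ∀ x : X, closure (orbit M x) ∈ 𝓝 x) : IsMinimal M X := by
  refine (isMinimal_iff_isClosed_smul_invariant M).2 fun C hC hinv => ?_
  have hopen : IsOpen C := isOpen_iff_mem_nhds.2 fun x hx =>
    Filter.mem_of_superset (h x) <| closure_minimal
      (range_subset_iff.2 fun c => hinv c (smul_mem_smul_set hx)) hC
  exact isClopen_iff.1 ⟨hC, hopen⟩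

theorem fixedPt_mem_of_map_lt {α : Type*} [LinearOrder α] [TopologicalSpace α]
    [CompactIccSpace α] [ClosedIicTopology α] {f : α → α} (hf : Monotone f) {C : Set α}
    (hC : IsClosed C) (hfC : MapsTo f C C) {p x : α} (hp : f p = p) (hpx : p ≤ x)
    (hlt : ∀ t ∈ Ioc p x, f t < t) (hx : x ∈ C) : p ∈ C := by
  obtain ⟨s, ⟨⟨hps, hsx⟩, hsC⟩, hleast⟩ :=
    (isCompact_Icc.inter_right hC).exists_isLeast ⟨x, ⟨hpx, le_rfl⟩, hx⟩
  rcases hps.eq_or_lt with rfl | hps'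
  · exact hsC
  · have hfs : f s < s := hlt s ⟨hps', hsx⟩
    have hpf : p ≤ f s := hp.symm.trans_le (hf hps)
    exact absurd (hleast ⟨⟨hpf, hfs.le.trans hsx⟩, hfC hsC⟩) hfs.not_ge

theorem fixedPt_mem_of_lt_map {α : Type*} [LinearOrder α] [TopologicalSpace α]
    [CompactIccSpace α] [ClosedIciTopology α] {f : α → α} (hf : Monotone f) {C : Set α}
    (hC : IsClosed C) (hfC : MapsTo f C C) {r x : α} (hr : f r = r) (hxr : x ≤ r)
    (hlt : ∀ t ∈ Ico x r, t < f t) (hx : x ∈ C) : r ∈ C :=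
  fixedPt_mem_of_map_lt (α := αᵒᵈ) hf.dual hC hfC hr hxr (fun t ht => hlt t ⟨ht.2, ht.1⟩) hx

/-- The elements of `K` that preserve `s` and act on it, through the map `φ`, as some element of
`Γ` acts on `φ '' s`. -/
def realizedSubgroup (K Γ : Type*) {X Y : Type*} [Group K] [Group Γ] [MulAction K X]
    [MulAction Γ Y] (φ : X → Y) (s : Set X) : Subgroup K where
  carrier := {k | k • s = s ∧ ∃ g : Γ, ∀ x ∈ s, g • φ x = φ (k • x)}
  one_mem' := ⟨one_smul K s, 1, fun x _ => by rw [one_smul, one_smul]⟩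
  mul_mem' := by
    rintro k l ⟨hks, g, hg⟩ ⟨hls, h, hh⟩
    refine ⟨by rw [mul_smul, hls, hks], g * h, fun x hx => ?_⟩
    have hlx : l • x ∈ s := hls ▸ smul_mem_smul_set hx
    rw [mul_smul, mul_smul, hh x hx, hg _ hlx]
  inv_mem' := by
    rintro k ⟨hks, g, hg⟩
    have hks' : k⁻¹ • s = s := by rw [inv_smul_eq_iff, hks]
    refine ⟨hks', g⁻¹, fun x hx => ?_⟩
    have hkx : k⁻¹ • x ∈ s := hks' ▸ smul_mem_smul_set hx
    rw [inv_smul_eq_iff, hg _ hkx, smul_inv_smul]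

theorem image_orbit_subset_orbit {K Γ X Y : Type*} [Group K] [Group Γ] [MulAction K X]
    [MulAction Γ Y] {φ : X → Y} {s : Set X} {L : Subgroup K}
    (hL : L ≤ realizedSubgroup K Γ φ s) {x : X} (hx : x ∈ s) :
    φ '' orbit L x ⊆ orbit Γ (φ x) := by
  rintro _ ⟨_, ⟨k, rfl⟩, rfl⟩
  obtain ⟨-, g, hg⟩ := hL k.2
  exact ⟨g, hg x hx⟩

end Dynamics

section Dyadic

theorem IsDyadic.midpoint {x y : ℝ} (hx : IsDyadic x) (hy : IsDyadic y) :
    IsDyadic ((x + y) / 2) := by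
  obtain ⟨a, m, rfl⟩ := hx
  obtain ⟨b, n, rfl⟩ := hy
  refine ⟨a * 2 ^ n + b * 2 ^ m, m + n + 1, ?_⟩
  push_cast
  field_simp
  ring

theorem exists_isDyadic_btwn {x y : ℝ} (h : x < y) : ∃ q, IsDyadic q ∧ x < q ∧ q < y := by
  obtain ⟨n, hn⟩ := pow_unbounded_of_one_lt (y - x)⁻¹ one_lt_two
  obtain ⟨z, hxz, hzy⟩ := exists_div_btwn (n := 2 ^ n) h (by exact_mod_cast hn)
  exact ⟨z / 2 ^ n, ⟨z, n, rfl⟩, by exact_mod_cast hxz, by exact_mod_cast hzy⟩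

theorem dense_setOf_isDyadic : Dense {x : ℝ | IsDyadic x} :=
  dense_of_exists_between fun _ _ h => exists_isDyadic_btwn h

end Dyadic

section Squeeze

/-- The copy on `[p, r]` of the standard generator `x₀` of Thompson's group `F`, extended by the
identity. On `[p, r]` its slopes are `1/2`, `1`, `2` in this order, so that it is the maximum of its
three affine pieces there. -/
noncomputable def squeeze (p r : ℝ) (h : p < r) : ℝ ≃o ℝ where
  toFun t := min t (max ((t + p) / 2) (max (t - (r - p) / 4) (2 * t - r)))
  invFun t := max t (min (2 * t - p) (min (t + (r - p) / 4) ((t + r) / 2)))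
  left_inv t := by grind
  right_inv t := by grind
  map_rel_iff' {s t} := by simp only [Equiv.coe_fn_mk]; grind

variable {p r : ℝ} (h : p < r)

theorem squeeze_apply (t : ℝ) : squeeze p r h t =
    min t (max ((t + p) / 2) (max (t - (r - p) / 4) (2 * t - r))) :=
  rfl

theorem squeeze_of_le_left {t : ℝ} (ht : t ≤ p) : squeeze p r h t = t := by
  rw [squeeze_apply]
  grind

theorem squeeze_of_right_le {t : ℝ} (ht : r ≤ t) : squeeze p r h t = t := by
  rw [squeeze_apply]
  grind

theorem squeeze_of_mem_Icc_first {t : ℝ} (ht : t ∈ Icc p ((p + r) / 2)) :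
    squeeze p r h t = (t + p) / 2 := by
  rw [squeeze_apply]
  grind

theorem squeeze_of_mem_Icc_second {t : ℝ}
    (ht : t ∈ Icc ((p + r) / 2) (((p + r) / 2 + r) / 2)) :
    squeeze p r h t = t - (r - p) / 4 := by
  rw [squeeze_apply]
  grind

theorem squeeze_of_mem_Icc_third {t : ℝ} (ht : t ∈ Icc (((p + r) / 2 + r) / 2) r) :
    squeeze p r h t = 2 * t - r := by
  rw [squeeze_apply]
  grind

theorem squeeze_lt_self {t : ℝ} (hp : p < t) (hr : t < r) : squeeze p r h t < t := by
  rw [squeeze_apply]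
  grind

theorem squeeze_inThompsonF (hp : IsDyadic p) (hr : IsDyadic r) (hp₀ : 0 < p) (hr₁ : r < 1) :
    InThompsonF (squeeze p r h) := by
  refine ⟨fun t ht => ?_, 5, ![0, p, (p + r) / 2, ((p + r) / 2 + r) / 2, r, 1], rfl, rfl,
    ?_, ?_, ?_⟩
  · rcases not_and_or.1 ht with ht | ht
    · exact squeeze_of_le_left h (by linarith)
    · exact squeeze_of_right_le h (by linarith)
  · have h₁ : p < (p + r) / 2 := by linarith
    have h₂ : (p + r) / 2 < ((p + r) / 2 + r) / 2 := by linarith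
    have h₃ : ((p + r) / 2 + r) / 2 < r := by linarith
    simpa [Fin.strictMono_iff_lt_succ, Fin.forall_fin_succ]
      using ⟨hp₀, h₁, h₂, h₃, hr₁⟩
  · have hmid := hp.midpoint hr
    have h₀ : IsDyadic 0 := ⟨0, 0, by simp⟩
    have h₁ : IsDyadic 1 := ⟨1, 0, by simp⟩
    simpa [Fin.forall_fin_succ] using ⟨h₀, hp, hmid, hmid.midpoint hr, hr, h₁⟩
  · intro i
    fin_cases i
    · exact ⟨0, 0, fun t ht => by simpa using squeeze_of_le_left h ht.2⟩
    · exact ⟨-1, p / 2, fun t ht => by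
        rw [squeeze_of_mem_Icc_first h ht, zpow_neg_one]; ring⟩
    · exact ⟨0, -((r - p) / 4), fun t ht => by
        rw [squeeze_of_mem_Icc_second h ht, zpow_zero]; ring⟩
    · exact ⟨1, -r, fun t ht => by
        rw [squeeze_of_mem_Icc_third h ht, zpow_one]; ring⟩
    · exact ⟨0, 0, fun t ht => by simpa using squeeze_of_right_le h ht.1⟩

theorem squeeze_inH (hp : IsDyadic p) (hr : IsDyadic r) (hp₀ : 0 < p) (hr₁ : r < 1) :
    InH (squeeze p r h) := by
  refine ⟨squeeze_inThompsonF h hp hr hp₀ hr₁, 0, min p (1 - r), lt_min hp₀ (by linarith),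
    fun t ht => ?_, fun t ht => ?_⟩
  · simpa using squeeze_of_le_left h (ht.2.trans (min_le_left _ _))
  · have hrt : r ≤ t := by linarith [ht.1, min_le_right p (1 - r)]
    simpa using squeeze_of_right_le h hrt

end Squeeze

section UnitInterval

theorem InH.smul_Icc {f : ℝ ≃o ℝ} (hf : InH f) : f • Icc (0 : ℝ) 1 = Icc 0 1 := by
  obtain ⟨-, k, ε, hε, hleft, hright⟩ := hf
  have h₀ : f 0 = 0 := by simpa using hleft 0 ⟨le_rfl, hε.le⟩
  have h₁ : f 1 = 1 := by simpa using hright 1 ⟨by linarith, le_rfl⟩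
  exact (f.image_Icc 0 1).trans (by rw [h₀, h₁])

variable {L : Subgroup (ℝ ≃o ℝ)} {t : ℝ}

theorem isDyadic_mem_closure_orbit (hL : ∀ f, InH f → f ∈ L) (ht : t ∈ Ioo (0 : ℝ) 1) {q : ℝ}
    (hq : IsDyadic q) (hq01 : q ∈ Ioo (0 : ℝ) 1) : q ∈ closure (orbit L t) := by
  have hmaps : ∀ f ∈ L, MapsTo f (closure (orbit L t)) (closure (orbit L t)) := fun f hf x hx =>
    smul_closure_orbit_subset (⟨f, hf⟩ : L) t (smul_mem_smul_set hx)
  have htC : t ∈ closure (orbit L t) := subset_closure (mem_orbit_self t)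
  rcases lt_trichotomy q t with hqt | rfl | htq
  · obtain ⟨r, hr, htr, hr₁⟩ := exists_isDyadic_btwn ht.2
    let f := squeeze q r (hqt.trans htr)
    have hf : f ∈ L := hL f (squeeze_inH _ hq hr hq01.1 hr₁)
    exact fixedPt_mem_of_map_lt f.monotone isClosed_closure (hmaps f hf)
      (squeeze_of_le_left _ le_rfl) hqt.le
      (fun s hs => squeeze_lt_self _ hs.1 (hs.2.trans_lt htr)) htC
  · exact htC
  · obtain ⟨p, hp, hp₀, hpt⟩ := exists_isDyadic_btwn ht.1
    let f := squeeze p q (hpt.trans htq)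
    have hf : f ∈ L := hL f (squeeze_inH _ hp hq hp₀ hq01.2)
    exact fixedPt_mem_of_lt_map f.symm.monotone isClosed_closure (hmaps f⁻¹ (L.inv_mem hf))
      (f.symm_apply_eq.2 (squeeze_of_right_le _ le_rfl).symm) htq.le
      (fun s hs => f.lt_symm_apply.2 (squeeze_lt_self _ (hpt.trans_le hs.1) hs.2)) htC

theorem Ioo_subset_closure_orbit (hL : ∀ f, InH f → f ∈ L) (ht : t ∈ Ioo (0 : ℝ) 1) :
    Ioo 0 1 ⊆ closure (orbit L t) :=
  (dense_setOf_isDyadic.open_subset_closure_inter isOpen_Ioo).trans <|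
    closure_minimal (fun _ hq => isDyadic_mem_closure_orbit hL ht hq.2 hq.1) isClosed_closure

theorem closure_orbit_mem_nhds_of_le_realizedSubgroup {Γ Y : Type*} [Group Γ]
    [TopologicalSpace Y] [MulAction Γ Y] {φ : ℝ ≃ₜ Y} (hL : ∀ f, InH f → f ∈ L)
    (hφ : L ≤ realizedSubgroup (ℝ ≃o ℝ) Γ φ (Icc 0 1)) (ht : t ∈ Ioo (0 : ℝ) 1) :
    closure (orbit Γ (φ t)) ∈ 𝓝 (φ t) := by
  refine Filter.mem_of_superset (φ.isOpenMap.image_mem_nhds (Ioo_mem_nhds ht.1 ht.2)) ?_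
  calc φ '' Ioo 0 1 ⊆ φ '' closure (orbit L t) := image_mono (Ioo_subset_closure_orbit hL ht)
    _ = closure (φ '' orbit L t) := φ.image_closure _
    _ ⊆ closure (orbit Γ (φ t)) :=
      closure_mono (image_orbit_subset_orbit hφ (Ioo_subset_Icc_self ht))

end UnitInterval

section Generators

variable {ρ : ℤ → Letter}

theorem IsLabelling.exists_conj_isZeta (hρ : IsLabelling ρ) (n : ℤ) :
    ∃ φ : ℝ ≃ᵢ ℝ, φ '' Ioo 0 1 = Ioo (n : ℝ) (n + 1) ∧
      ∀ ν ζ : ℝ ≃o ℝ, IsZeta ρ ν ζ → ∀ t ∈ Icc (0 : ℝ) 1, ζ (φ t) = φ (ν t) := by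
  rcases (hρ (2 * n + 1)).2 (odd_two_mul_add_one n) with hb | hB
  · refine ⟨.addLeft (n : ℝ), by simp [add_comm], fun ν ζ hζ t ht => ?_⟩
    simpa using (hζ n (n + t) ⟨by linarith [ht.1], by linarith [ht.2]⟩).1 hb
  · refine ⟨.subLeft (n + 1 : ℝ), by simp, fun ν ζ hζ t ht => ?_⟩
    simpa using (hζ n (n + 1 - t) ⟨by linarith [ht.2], by linarith [ht.1]⟩).2 hB

theorem IsLabelling.exists_conj_isChi (hρ : IsLabelling ρ) (n : ℤ) :
    ∃ φ : ℝ ≃ᵢ ℝ, φ '' Ioo 0 1 = Ioo (n - 1 / 2 : ℝ) (n + 1 / 2) ∧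
      ∀ ν χ : ℝ ≃o ℝ, IsChi ρ ν χ → ∀ t ∈ Icc (0 : ℝ) 1, χ (φ t) = φ (ν t) := by
  rcases (hρ (2 * n)).1 (even_two_mul n) with ha | hA
  · refine ⟨.addLeft (n - 1 / 2 : ℝ), ?_, fun ν χ hχ t ht => ?_⟩
    · exact (image_const_add_Ioo (n - 1 / 2 : ℝ) 0 1).trans (by ring_nf)
    · simpa using (hχ n (n - 1 / 2 + t) ⟨by linarith [ht.1], by linarith [ht.2]⟩).1 ha
  · refine ⟨.subLeft (n + 1 / 2 : ℝ), ?_, fun ν χ hχ t ht => ?_⟩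
    · exact (image_const_sub_Ioo _ _ _).trans (by ring_nf)
    · simpa using (hχ n (n + 1 / 2 - t) ⟨by linarith [ht.2], by linarith [ht.1]⟩).2 hA

theorem exists_int_mem_Ioo_or (x : ℝ) :
    ∃ n : ℤ, x ∈ Ioo (n : ℝ) (n + 1) ∨ x ∈ Ioo (n - 1 / 2 : ℝ) (n + 1 / 2) := by
  refine ⟨⌊x⌋, (Int.floor_le x).lt_or_eq.imp (fun h => ⟨h, Int.lt_floor_add_one x⟩) fun h => ?_⟩
  constructor <;> linarith

theorem IsLabelling.exists_conj (hρ : IsLabelling ρ) (x : ℝ) :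
    ∃ φ : ℝ ≃ᵢ ℝ, ∃ t ∈ Ioo (0 : ℝ) 1, φ t = x ∧
      ∀ ν ζ χ : ℝ ≃o ℝ, IsZeta ρ ν ζ → IsChi ρ ν χ →
        ∃ g ∈ ({ζ, χ} : Set (ℝ ≃o ℝ)), ∀ s ∈ Icc (0 : ℝ) 1, g (φ s) = φ (ν s) := by
  obtain ⟨n, hx | hx⟩ := exists_int_mem_Ioo_or x
  · obtain ⟨φ, himage, hφ⟩ := hρ.exists_conj_isZeta n
    obtain ⟨t, ht, rfl⟩ := himage ▸ hx
    exact ⟨φ, t, ht, rfl, fun ν ζ χ hζ _ => ⟨ζ, .inl rfl, hφ ν ζ hζ⟩⟩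
  · obtain ⟨φ, himage, hφ⟩ := hρ.exists_conj_isChi n
    obtain ⟨t, ht, rfl⟩ := himage ▸ hx
    exact ⟨φ, t, ht, rfl, fun ν ζ χ _ hχ => ⟨χ, .inr rfl, hφ ν χ hχ⟩⟩

end Generators

theorem range_vec_three {α : Type*} (a b c : α) : range ![a, b, c] = {a, b, c} := by
  rw [Matrix.range_cons, Matrix.range_cons_cons_empty, singleton_union]

theorem G_rho_action_minimal_general {ρ : ℤ → Letter} (hρ : IsLabelling ρ) {ι : Type*}
    {ν ζ χ : ι → ℝ ≃o ℝ} (hν : ∀ f, f ∈ Subgroup.closure (range ν) ↔ InH f)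
    (hζ : ∀ i, IsZeta ρ (ν i) (ζ i)) (hχ : ∀ i, IsChi ρ (ν i) (χ i))
    {G : Subgroup (ℝ ≃o ℝ)} (hG : G = Subgroup.closure (range ζ ∪ range χ)) : IsMinimal G ℝ := by
  subst hG
  refine isMinimal_of_closure_orbit_mem_nhds fun x => ?_
  obtain ⟨φ, t, ht, rfl, hφ⟩ := hρ.exists_conj x
  refine closure_orbit_mem_nhds_of_le_realizedSubgroup (φ := φ.toHomeomorph)
    (fun f => (hν f).2) ?_ ht
  rw [Subgroup.closure_le]
  rintro _ ⟨i, rfl⟩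
  obtain ⟨g, hg, hconj⟩ := hφ (ν i) (ζ i) (χ i) (hζ i) (hχ i)
  have hgen : g ∈ range ζ ∪ range χ :=
    hg.imp (fun h => ⟨i, h.symm⟩) fun h => ⟨i, h.symm⟩
  exact ⟨((hν _).1 (Subgroup.subset_closure ⟨i, rfl⟩)).smul_Icc,
    ⟨g, Subgroup.subset_closure hgen⟩, hconj⟩

/-- For a quasi-periodic labelling `ρ`, the action of `G_ρ` on `ℝ`
is minimal: every orbit is dense. -/
theorem G_rho_action_minimal
    (ρ : ℤ → Letter) (hρ : IsQuasiPeriodic ρ)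
    (H : Subgroup (ℝ ≃o ℝ)) (hH : ∀ f : ℝ ≃o ℝ, f ∈ H ↔ InH f)
    (ν₁ ν₂ ν₃ : ℝ ≃o ℝ) (hgen : Subgroup.closure {ν₁, ν₂, ν₃} = H)
    (ζ₁ ζ₂ ζ₃ χ₁ χ₂ χ₃ : ℝ ≃o ℝ)
    (hζ₁ : IsZeta ρ ν₁ ζ₁) (hζ₂ : IsZeta ρ ν₂ ζ₂) (hζ₃ : IsZeta ρ ν₃ ζ₃)
    (hχ₁ : IsChi ρ ν₁ χ₁) (hχ₂ : IsChi ρ ν₂ χ₂) (hχ₃ : IsChi ρ ν₃ χ₃)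
    (G : Subgroup (ℝ ≃o ℝ))
    (hG : G = Subgroup.closure {ζ₁, ζ₂, ζ₃, χ₁, χ₂, χ₃})
    : ∀ x : ℝ, Dense {y : ℝ | ∃ g ∈ G, g x = y} := by
  subst hgen
  have hmin : IsMinimal G ℝ := G_rho_action_minimal_general hρ.1 (ν := ![ν₁, ν₂, ν₃])
    (ζ := ![ζ₁, ζ₂, ζ₃]) (χ := ![χ₁, χ₂, χ₃]) (by rwa [range_vec_three])
    (by simp [Fin.forall_fin_succ, *]) (by simp [Fin.forall_fin_succ, *])
    (by simp only [hG, range_vec_three, insert_union, singleton_union])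
  exact fun x => (hmin.dense_orbit x).mono (range_subset_iff.2 fun ⟨g, hg⟩ => ⟨g, hg, rfl⟩)
end
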